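/- arXiv:1602.08643 — 3 statements merged into one kernel-verified Lean document; each statement's English description precedes it below -/
import Mathlib

section
/- There is a constant C > 0, depending only on κ₁ and κ₂, such that for all A, y ∈ ℝ and all integers N ≥ 2, |E_N^cg(A,y) − W'(A)·(A − y)| ≤ C·(A − y)²/(N − 1); in particular E_N^cg(A,y) converges to E^cg(A,y) = W'(A)·(A − y) as N → ∞. -/
/-!
The lattice energy only sees `W ψ` through two facts: it lies above its tangent at `A`, and below
a parabola of curvature `κ` touching it there. Summed over the bonds, the tangent telescopes to the
boundary term `W'(A) (A - y)`, which bounds every admissible energy from below; the parabola,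
evaluated at the configuration with uniform strain `A + (A - y) / (N - 1)`, costs at most
`(N - 1) * κ / 2 * ((A - y) / (N - 1))²` more.

The parabola comes from two dualities, each of which inverts the curvature bound. First, `ψ'' ≤ κ`
makes the log-partition function `Λ σ = log ∫ exp (-ψ y + σ y) dy` strongly convex with modulus
`κ⁻¹`: after the substitution `y = z + σ / κ`, the square `σ² / (2 κ)` splits off and the rest of
the exponent is convex in `σ` for each `z`, so its log-integral is convex by Hölder's inequality.
Second, the Legendre transform `W ψ` of a function whose strong convexity modulus is `κ⁻¹` has
curvature at most `κ`; the maximizer in the supremum defining `W ψ A` is the slope of the tangent.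
-/

noncomputable section

open MeasureTheory Real Filter

/-- The Cauchy–Born strain energy `W(A)`. -/
def W (ψ : ℝ → ℝ) (A : ℝ) : ℝ :=
  ⨆ σ : ℝ, (σ * A - Real.log (∫ y : ℝ, Real.exp (-ψ y + σ * y)))

/-- The finite-domain coarse-grained energy
`E_N^cg(A,y) = inf { ∑_{i=2}^N [Wf(u_i - u_{i-1}) - Wf(A)] : u₁ = y, u_N = N A }`. -/
def EcgN (Wf : ℝ → ℝ) (N : ℕ) (A y : ℝ) : ℝ :=
  sInf { E : ℝ | ∃ u : ℕ → ℝ, u 1 = y ∧ u N = N * A ∧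
    E = ∑ i ∈ Finset.Icc 2 N, (Wf (u i - u (i - 1)) - Wf A) }

open Set Topology
open scoped RealInnerProductSpace

section Convexity

lemma strongConvexOn_univ_of_le_deriv2 {f : ℝ → ℝ} {m : ℝ} (hf : Differentiable ℝ f)
    (hf' : Differentiable ℝ (deriv f)) (hm : ∀ x, m ≤ deriv^[2] f x) :
    StrongConvexOn univ m f := by
  have hd : ∀ x, HasDerivAt (fun x => f x - m / 2 * ‖x‖ ^ 2) (deriv f x - m * x) x := fun x => by
    simp_rw [norm_eq_abs, sq_abs]
    refine ((hf x).hasDerivAt.sub (((hasDerivAt_id x).pow 2).const_mul (m / 2))).congr_deriv ?_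
    simp only [id]
    ring
  have hd' : ∀ x, HasDerivAt (fun x => deriv f x - m * x) (deriv^[2] f x - m) x := fun x => by
    simpa using! (hf' x).hasDerivAt.sub ((hasDerivAt_id x).const_mul m)
  exact strongConvexOn_iff_convex.2 <| convexOn_of_hasDerivWithinAt2_nonneg convex_univ
    (fun x _ => (hd x).continuousAt.continuousWithinAt) (fun x _ => (hd x).hasDerivWithinAt)
    (fun x _ => (hd' x).hasDerivWithinAt) (fun x _ => sub_nonneg.2 (hm x))

lemma strongConcaveOn_univ_of_deriv2_le {f : ℝ → ℝ} {m : ℝ} (hf : Differentiable ℝ f)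
    (hf' : Differentiable ℝ (deriv f)) (hm : ∀ x, deriv^[2] f x ≤ -m) :
    StrongConcaveOn univ m f := by
  have hneg : deriv (-f) = -deriv f := deriv.neg'
  have h : StrongConvexOn univ m (-f) :=
    strongConvexOn_univ_of_le_deriv2 hf.neg (hneg ▸ hf'.neg) fun x => by
      simpa [hneg, le_neg] using hm x
  simpa [StrongConcaveOn] using h.neg

lemma add_half_mul_sq_norm_sub_le_of_isMinOn {E : Type*} [NormedAddCommGroup E]
    [NormedSpace ℝ E] {s : Set E} {f : E → ℝ} {m : ℝ} {p x : E} (hf : StrongConvexOn s m f)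
    (hp : IsMinOn f s p) (hps : p ∈ s) (hxs : x ∈ s) :
    f p + m / 2 * ‖x - p‖ ^ 2 ≤ f x := by
  set q := m / 2 * ‖x - p‖ ^ 2
  have hseg : ∀ a ∈ Ioo (0 : ℝ) 1, f p + (1 - a) * q ≤ f x := by
    rintro a ⟨ha₀, ha₁⟩
    have hmin : f p ≤ f (a • x + (1 - a) • p) :=
      hp (hf.1 hxs hps ha₀.le (sub_nonneg.2 ha₁.le) (add_sub_cancel a 1))
    have hconv := hf.2 hxs hps ha₀.le (sub_nonneg.2 ha₁.le) (add_sub_cancel a 1)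
    simp only [smul_eq_mul] at hconv
    refine le_of_mul_le_mul_left ?_ ha₀
    linear_combination hmin + hconv
  have hlim : Tendsto (fun a : ℝ => f p + (1 - a) * q) (𝓝[>] 0) (𝓝 (f p + q)) := by
    have : Continuous fun a : ℝ => f p + (1 - a) * q := by fun_prop
    simpa using (this.tendsto 0).mono_left nhdsWithin_le_nhds
  exact le_of_tendsto hlim (mem_of_superset (Ioo_mem_nhdsGT one_pos) hseg)

variable {E : Type*} [NormedAddCommGroup E] [InnerProductSpace ℝ E] {f : E → ℝ} {m : ℝ}

lemma strongConvexOn_sub_inner {s : Set E} (hf : StrongConvexOn s m f) (x : E) :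
    StrongConvexOn s m fun σ => f σ - ⟪σ, x⟫ := by
  have hlin : ConcaveOn ℝ s fun σ => ⟪σ, x⟫ := by
    simpa only [real_inner_comm] using! (innerₗ E x).concaveOn hf.1
  simpa [StrongConvexOn] using! UniformConvexOn.sub hf (uniformConcaveOn_zero.2 hlin)

lemma convexOn_sq_norm_sub_of_strongConcaveOn {s : Set E} (hf : StrongConcaveOn s (-m) f) :
    ConvexOn ℝ s fun x => m / 2 * ‖x‖ ^ 2 - f x := by
  refine (strongConcaveOn_iff_convex.1 hf).neg.congr fun x _ => ?_
  simp only [Pi.neg_apply]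
  ring

lemma hasGradientAt_of_abs_sub_inner_le [CompleteSpace E] {C : ℝ} {x p : E}
    (h : ∀ y, |f y - f x - ⟪p, y - x⟫| ≤ C * ‖y - x‖ ^ 2) : HasGradientAt f p x := by
  refine hasGradientAt_iff_isLittleO.2 (Asymptotics.IsBigO.trans_isLittleO ?_
    (Asymptotics.isLittleO_pow_sub_sub x one_lt_two))
  exact Asymptotics.IsBigO.of_bound C (Eventually.of_forall fun y => by simpa using h y)

variable [FiniteDimensional ℝ E]

lemma continuous_of_strongConvexOn (hm : 0 ≤ m) (hf : StrongConvexOn univ m f) :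
    Continuous f :=
  (hf.convexOn fun r => by simp only [Pi.zero_apply]; positivity).locallyLipschitz.continuous

lemma exists_affine_add_sq_norm_le (hf : StrongConvexOn univ m f) :
    ∃ (c : ℝ) (v : E), ∀ x, c + ⟪v, x⟫ + m / 2 * ‖x‖ ^ 2 ≤ f x := by
  have hg := strongConvexOn_iff_convex.1 hf
  obtain ⟨l, c, hl, -⟩ := hg.exists_affine_le_of_lt (𝕜 := ℝ) (mem_univ 0) (sub_one_lt _)
    isClosed_univ (hg.locallyLipschitz.continuous.lowerSemicontinuous.lowerSemicontinuousOn _)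
  refine ⟨c, (InnerProductSpace.toDual ℝ E).symm l, fun x => ?_⟩
  have hx : l x + c ≤ f x - m / 2 * ‖x‖ ^ 2 := by simpa using hl ⟨x, mem_univ x⟩
  rw [InnerProductSpace.toDual_symm_apply]
  linarith

lemma tendsto_cocompact_atTop_of_strongConvexOn (hm : 0 < m) (hf : StrongConvexOn univ m f) :
    Tendsto f (cocompact E) atTop := by
  obtain ⟨c, v, hcv⟩ := exists_affine_add_sq_norm_le hf
  have hnorm : Tendsto (fun x : E => ‖x‖) (cocompact E) atTop := tendsto_norm_cocompact_atTop
  have hquad : Tendsto (fun x : E => c + ‖x‖ * (m / 2 * ‖x‖ - ‖v‖)) (cocompact E) atTop :=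
    tendsto_atTop_add_const_left _ _ (hnorm.atTop_mul_atTop₀
      (tendsto_atTop_add_const_right _ _ (hnorm.const_mul_atTop (half_pos hm))))
  refine tendsto_atTop_mono (fun x => ?_) hquad
  have hvx : -(‖v‖ * ‖x‖) ≤ ⟪v, x⟫ := neg_le_of_abs_le (abs_real_inner_le_norm v x)
  linarith [hcv x]

lemma exists_forall_add_inner_add_sq_le (hm : 0 < m) (hf : StrongConvexOn univ m f) (x : E) :
    ∃ p, ∀ σ, f p + ⟪σ - p, x⟫ + m / 2 * ‖σ - p‖ ^ 2 ≤ f σ := by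
  have htilt := strongConvexOn_sub_inner hf x
  obtain ⟨p, hp⟩ := (continuous_of_strongConvexOn hm.le htilt).exists_forall_le
    (tendsto_cocompact_atTop_of_strongConvexOn hm htilt)
  refine ⟨p, fun σ => ?_⟩
  have hgrowth := add_half_mul_sq_norm_sub_le_of_isMinOn htilt (fun τ _ => hp τ) (mem_univ p)
    (mem_univ σ)
  rw [inner_sub_left]
  linarith

end Convexity

section Legendre

variable {E : Type*} [NormedAddCommGroup E] [InnerProductSpace ℝ E] {f : E → ℝ} {m : ℝ}

/-- The Legendre transform (convex conjugate) of `f`, under which `W ψ` is the image of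
`logPartition ψ`. As a supremum in `ℝ`, it is `0` at the points where the supremum is infinite. -/
def legendreTransform (f : E → ℝ) (x : E) : ℝ := ⨆ σ, (⟪σ, x⟫ - f σ)

lemma inner_le_sq_norm_add_sq_norm (hm : 0 < m) (x y : E) :
    ⟪x, y⟫ ≤ m / 2 * ‖x‖ ^ 2 + m⁻¹ / 2 * ‖y‖ ^ 2 := by
  have hyoung : 2 * ‖x‖ * ‖y‖ ≤ m * ‖x‖ ^ 2 + m⁻¹ * ‖y‖ ^ 2 := two_mul_le_add_mul_sq hm
  linarith [real_inner_le_norm x y]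

lemma exists_legendreTransform_sub_mem_Icc [FiniteDimensional ℝ E] (hm : 0 < m)
    (hf : StrongConvexOn univ m f) (x : E) :
    ∃ p, ∀ y, legendreTransform f y - legendreTransform f x - ⟪p, y - x⟫ ∈
      Icc 0 (m⁻¹ / 2 * ‖y - x‖ ^ 2) := by
  obtain ⟨p, hp⟩ := exists_forall_add_inner_add_sq_le hm hf x
  have hle : ∀ y σ, ⟪σ, y⟫ - f σ ≤ ⟪p, y⟫ - f p + m⁻¹ / 2 * ‖y - x‖ ^ 2 := fun y σ => by
    have hyoung := inner_le_sq_norm_add_sq_norm hm (σ - p) (y - x)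
    have hsupport := hp σ
    simp only [inner_sub_left, inner_sub_right] at hyoung hsupport
    linarith
  have hlower : ∀ y, ⟪p, y⟫ - f p ≤ legendreTransform f y := fun y =>
    le_ciSup (f := fun σ => ⟪σ, y⟫ - f σ) ⟨_, forall_mem_range.2 (hle y)⟩ p
  have hupper : ∀ y, legendreTransform f y ≤ ⟪p, y⟫ - f p + m⁻¹ / 2 * ‖y - x‖ ^ 2 := fun y =>
    ciSup_le (hle y)
  have hattained : legendreTransform f x = ⟪p, x⟫ - f p :=
    le_antisymm (by simpa using hupper x) (hlower x)
  refine ⟨p, fun y => ?_⟩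
  rw [hattained, inner_sub_right]
  constructor <;> linarith [hlower y, hupper y]

end Legendre

section LogPartition

lemma integral_exp_sub_log_integral_exp {α : Type*} [MeasurableSpace α] {μ : Measure α}
    [NeZero μ] {g : α → ℝ} (hg : Integrable (fun z => exp (g z)) μ) :
    ∫ z, exp (g z - log (∫ z, exp (g z) ∂μ)) ∂μ = 1 := by
  simp_rw [exp_sub, exp_log (integral_exp_pos hg)]
  rw [integral_div, div_self (integral_exp_pos hg).ne']

/-- After normalizing the integrals to `1`, Hölder's inequality is the convexity of `exp`. -/
lemma convexOn_log_integral_exp {α F : Type*} [MeasurableSpace α] {μ : Measure α} [NeZero μ]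
    [AddCommMonoid F] [Module ℝ F] {s : Set F} {g : F → α → ℝ} (hs : Convex ℝ s)
    (hg : ∀ z, ConvexOn ℝ s fun x => g x z)
    (hint : ∀ x ∈ s, Integrable (fun z => exp (g x z)) μ) :
    ConvexOn ℝ s fun x => log (∫ z, exp (g x z) ∂μ) := by
  refine ⟨hs, fun x hx y hy a b ha hb hab => ?_⟩
  have hint_sub : ∀ w ∈ s, ∀ c, Integrable (fun z => exp (g w z - c)) μ := fun w hw c => by
    simpa only [exp_sub] using (hint w hw).div_const (exp c)
  have hxy : a • x + b • y ∈ s := hs hx hy ha hb hab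
  set Λ : F → ℝ := fun x => log (∫ z, exp (g x z) ∂μ)
  set L : ℝ := a • Λ x + b • Λ y
  have hpointwise : ∀ z, exp (g (a • x + b • y) z - L) ≤
      a * exp (g x z - Λ x) + b * exp (g y z - Λ y) := fun z => by
    have hgz := (hg z).2 hx hy ha hb hab
    have hexp := convexOn_exp.2 (mem_univ (g x z - Λ x)) (mem_univ (g y z - Λ y)) ha hb hab
    simp only [smul_eq_mul] at hgz hexp
    refine (exp_le_exp.2 ?_).trans hexp
    simp only [L, smul_eq_mul]
    linarith
  have hnormalized : (∫ z, exp (g (a • x + b • y) z) ∂μ) / exp L ≤ 1 := by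
    calc (∫ z, exp (g (a • x + b • y) z) ∂μ) / exp L
        = ∫ z, exp (g (a • x + b • y) z - L) ∂μ := by simp_rw [exp_sub, integral_div]
      _ ≤ ∫ z, (a * exp (g x z - Λ x) + b * exp (g y z - Λ y)) ∂μ :=
          integral_mono (hint_sub _ hxy L) (((hint_sub x hx _).const_mul a).add
            ((hint_sub y hy _).const_mul b)) hpointwise
      _ = a * 1 + b * 1 := by
          rw [integral_add ((hint_sub x hx _).const_mul a) ((hint_sub y hy _).const_mul b),
            integral_const_mul, integral_const_mul,
            integral_exp_sub_log_integral_exp (hint x hx),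
            integral_exp_sub_log_integral_exp (hint y hy)]
      _ = 1 := by rw [mul_one, mul_one, hab]
  exact (log_le_iff_le_exp (integral_exp_pos (hint _ hxy))).2
    ((div_le_one (exp_pos L)).1 hnormalized)

variable {E : Type*} [NormedAddCommGroup E] [InnerProductSpace ℝ E] {ψ : E → ℝ} {m κ : ℝ}

lemma inner_add_inv_smul_eq (hκ : κ ≠ 0) (σ z : E) :
    ⟪σ, z + κ⁻¹ • σ⟫ = κ⁻¹ / 2 * ‖σ‖ ^ 2 + κ / 2 * ‖z + κ⁻¹ • σ‖ ^ 2 - κ / 2 * ‖z‖ ^ 2 := by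
  rw [norm_add_sq_real, inner_add_right, inner_smul_right, inner_smul_right, norm_smul, mul_pow,
    norm_eq_abs, sq_abs, real_inner_self_eq_norm_sq, real_inner_comm]
  field_simp
  ring

variable [FiniteDimensional ℝ E] [MeasurableSpace E] [BorelSpace E]

/-- The logarithm of the partition function of the potential `ψ` under the load `σ`. It is the
function `σ ↦ log ∫ exp (-ψ y + σ y) dy` in the definition of `W ψ`. -/
def logPartition (ψ : E → ℝ) (σ : E) : ℝ := log (∫ y, exp (-ψ y + ⟪σ, y⟫))

lemma integrable_exp_neg_add_inner (hm : 0 < m) (hψ : StrongConvexOn univ m ψ) (σ : E) :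
    Integrable fun y => exp (-ψ y + ⟪σ, y⟫) := by
  obtain ⟨c, v, hcv⟩ := exists_affine_add_sq_norm_le hψ
  have hgauss : Integrable fun y : E => exp (-(m / 2) * ‖y‖ ^ 2 + ⟪σ - v, y⟫) := by
    have hb : 0 < ((m / 2 : ℝ) : ℂ).re := by simpa using hm
    refine (GaussianFourier.integrable_cexp_neg_mul_sq_norm_add hb 1 (σ - v)).norm.congr ?_
    refine Eventually.of_forall fun y => ?_
    simp only [Complex.norm_exp]
    norm_cast
    simp
  have hmeas : Continuous fun y => exp (-ψ y + ⟪σ, y⟫) := by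
    have := continuous_of_strongConvexOn hm.le hψ
    fun_prop
  refine (hgauss.const_mul (exp (-c))).mono' hmeas.aestronglyMeasurable
    (Eventually.of_forall fun y => ?_)
  rw [norm_of_nonneg (exp_pos _).le, ← exp_add, exp_le_exp, inner_sub_left]
  linarith [hcv y]

lemma strongConvexOn_logPartition (hκ : 0 < κ) (hψ : StrongConcaveOn univ (-κ) ψ)
    (hint : ∀ σ, Integrable fun y => exp (-ψ y + ⟪σ, y⟫)) :
    StrongConvexOn univ κ⁻¹ (logPartition ψ) := by
  set g : E → E → ℝ := fun σ z =>
    κ / 2 * ‖z + κ⁻¹ • σ‖ ^ 2 - ψ (z + κ⁻¹ • σ) - κ / 2 * ‖z‖ ^ 2 with hg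
  have hexp : ∀ σ z, exp (g σ z) =
      exp (-ψ (z + κ⁻¹ • σ) + ⟪σ, z + κ⁻¹ • σ⟫) / exp (κ⁻¹ / 2 * ‖σ‖ ^ 2) := fun σ z => by
    rw [← exp_sub, inner_add_inv_smul_eq hκ.ne']
    congr 1
    simp only [hg]
    ring
  have hg_int : ∀ σ, Integrable fun z => exp (g σ z) := fun σ => by
    simp_rw [hexp]
    exact ((hint σ).comp_add_right (κ⁻¹ • σ)).div_const _
  have hg_convex : ∀ z, ConvexOn ℝ univ fun σ => g σ z := fun z =>
    ((convexOn_sq_norm_sub_of_strongConcaveOn hψ).comp_affineMap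
      (AffineMap.const ℝ E z + κ⁻¹ • AffineMap.id ℝ E)).add_const (-(κ / 2 * ‖z‖ ^ 2))
  have hlog : ∀ σ, log (∫ z, exp (g σ z)) = logPartition ψ σ - κ⁻¹ / 2 * ‖σ‖ ^ 2 := fun σ => by
    simp_rw [hexp]
    rw [integral_div, integral_add_right_eq_self (fun y => exp (-ψ y + ⟪σ, y⟫)),
      log_div (integral_exp_pos (hint σ)).ne' (exp_pos _).ne', log_exp, logPartition]
  exact strongConvexOn_iff_convex.2 <|
    (convexOn_log_integral_exp convex_univ hg_convex fun σ _ => hg_int σ).congr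
      fun σ _ => hlog σ

end LogPartition

lemma W_eq_legendreTransform (ψ : ℝ → ℝ) : W ψ = legendreTransform (logPartition ψ) := by
  funext A
  simp only [W, legendreTransform, logPartition, RCLike.inner_apply, conj_trivial, mul_comm]

lemma exists_hasDerivAt_W_and_sub_mem_Icc {ψ : ℝ → ℝ} {κ : ℝ} (hκ : 0 < κ)
    (hψ : StrongConcaveOn univ (-κ) ψ) (hint : ∀ σ, Integrable fun y => exp (-ψ y + σ * y))
    (A : ℝ) :
    ∃ s, HasDerivAt (W ψ) s A ∧
      ∀ B, W ψ B - W ψ A - s * (B - A) ∈ Icc 0 (κ / 2 * (B - A) ^ 2) := by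
  have hΛ : StrongConvexOn univ κ⁻¹ (logPartition ψ) :=
    strongConvexOn_logPartition hκ hψ (by simpa [mul_comm] using hint)
  obtain ⟨s, hs⟩ := exists_legendreTransform_sub_mem_Icc (inv_pos.2 hκ) hΛ A
  rw [← W_eq_legendreTransform] at hs
  refine ⟨s, (hasGradientAt_of_abs_sub_inner_le (C := κ⁻¹⁻¹ / 2) fun B => ?_).hasDerivAt',
    fun B => ?_⟩
  · rw [abs_of_nonneg (hs B).1]
    exact (hs B).2
  · simpa [mul_comm s] using hs B

section Chain

variable {f : ℝ → ℝ} {A s y : ℝ} {N : ℕ}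

lemma sum_Icc_succ_sub_pred {G : Type*} [AddCommGroup G] (u : ℕ → G) {k n : ℕ} (hkn : k ≤ n) :
    ∑ i ∈ Finset.Icc (k + 1) n, (u i - u (i - 1)) = u n - u k := by
  induction n, hkn using Nat.le_induction with
  | base => simp
  | succ n hkn ih =>
    rw [Finset.sum_Icc_succ_top (Nat.succ_le_succ hkn), ih, Nat.add_sub_cancel]
    abel

/-- The energies of the admissible configurations of the chain of `N` atoms: `EcgN f N A y` is the
infimum of this set. -/
def chainEnergies (f : ℝ → ℝ) (N : ℕ) (A y : ℝ) : Set ℝ :=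
  {E | ∃ u : ℕ → ℝ, u 1 = y ∧ u N = N * A ∧
    E = ∑ i ∈ Finset.Icc 2 N, (f (u i - u (i - 1)) - f A)}

lemma mem_lowerBounds_chainEnergies (hf : ∀ B, f A + s * (B - A) ≤ f B) (hN : 1 ≤ N) :
    s * (A - y) ∈ lowerBounds (chainEnergies f N A y) := by
  rintro _ ⟨u, hu₁, huN, rfl⟩
  calc s * (A - y) = s * (u N - u 1 - (N - 1 : ℝ) * A) := by rw [hu₁, huN]; ring
    _ = ∑ i ∈ Finset.Icc 2 N, s * (u i - u (i - 1) - A) := by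
        rw [← Finset.mul_sum, Finset.sum_sub_distrib, sum_Icc_succ_sub_pred u hN]
        simp [Nat.cast_sub hN]
    _ ≤ ∑ i ∈ Finset.Icc 2 N, (f (u i - u (i - 1)) - f A) :=
        Finset.sum_le_sum fun i _ => by linarith [hf (u i - u (i - 1))]

lemma uniform_strain_mem_chainEnergies (f : ℝ → ℝ) (A y : ℝ) (hN : 2 ≤ N) :
    (N - 1 : ℝ) * (f (A + (A - y) / (N - 1)) - f A) ∈ chainEnergies f N A y := by
  have hN₀ : (N - 1 : ℝ) ≠ 0 := sub_ne_zero.2 (by exact_mod_cast (by omega : N ≠ 1))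
  set d := A + (A - y) / (N - 1 : ℝ) with hd
  refine ⟨fun i => y + (i - 1 : ℝ) * d, by simp, ?_, ?_⟩
  · simp only [hd]
    field_simp
    ring
  · have hbond : ∀ i ∈ Finset.Icc 2 N,
        f (y + (i - 1 : ℝ) * d - (y + ((i - 1 : ℕ) - 1 : ℝ) * d)) - f A = f d - f A := by
      intro i hi
      rw [Nat.cast_pred (by grind)]
      ring_nf
    rw [Finset.sum_congr rfl hbond, Finset.sum_const, Nat.card_Icc, nsmul_eq_mul,
      Nat.add_sub_add_right N 1 1, Nat.cast_pred (by omega)]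

lemma EcgN_sub_mem_Icc {C : ℝ}
    (hf : ∀ B, f B - f A - s * (B - A) ∈ Icc 0 (C * (B - A) ^ 2)) (y : ℝ) (hN : 2 ≤ N) :
    EcgN f N A y - s * (A - y) ∈ Icc 0 (C * (A - y) ^ 2 / (N - 1)) := by
  have hN₀ : 0 < (N - 1 : ℝ) := sub_pos.2 (by exact_mod_cast hN)
  have hmem := uniform_strain_mem_chainEnergies f A y hN
  have hlower : s * (A - y) ∈ lowerBounds (chainEnergies f N A y) :=
    mem_lowerBounds_chainEnergies (fun B => by linarith [(hf B).1]) (by omega)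
  refine ⟨sub_nonneg.2 (le_csInf ⟨_, hmem⟩ hlower), sub_le_iff_le_add.2 ?_⟩
  have hparabola := (hf (A + (A - y) / (N - 1))).2
  rw [add_sub_cancel_left] at hparabola
  calc EcgN f N A y ≤ (N - 1) * (f (A + (A - y) / (N - 1)) - f A) := csInf_le ⟨_, hlower⟩ hmem
    _ ≤ (N - 1) * (s * ((A - y) / (N - 1)) + C * ((A - y) / (N - 1)) ^ 2) :=
        mul_le_mul_of_nonneg_left (by linarith) hN₀.le
    _ = C * (A - y) ^ 2 / (N - 1) + s * (A - y) := by field_simp; ring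

end Chain

theorem coarse_grained_energy_limit_no_forces_general {ψ : ℝ → ℝ} {κ : ℝ} (hκ : 0 < κ)
    (hψ : StrongConcaveOn univ (-κ) ψ) (hint : ∀ σ, Integrable fun y => exp (-ψ y + σ * y)) :
    Differentiable ℝ (W ψ) ∧
      (∀ (A y : ℝ) (N : ℕ), 2 ≤ N →
        |EcgN (W ψ) N A y - deriv (W ψ) A * (A - y)| ≤ κ / 2 * (A - y) ^ 2 / ((N : ℝ) - 1)) ∧
      ∀ A y : ℝ,
        Tendsto (fun N : ℕ => EcgN (W ψ) N A y) atTop (𝓝 (deriv (W ψ) A * (A - y))) := by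
  have hW := exists_hasDerivAt_W_and_sub_mem_Icc hκ hψ hint
  have hbound : ∀ (A y : ℝ) (N : ℕ), 2 ≤ N →
      |EcgN (W ψ) N A y - deriv (W ψ) A * (A - y)| ≤ κ / 2 * (A - y) ^ 2 / ((N : ℝ) - 1) := by
    intro A y N hN
    obtain ⟨s, hderiv, hremainder⟩ := hW A
    obtain ⟨hnonneg, hle⟩ := EcgN_sub_mem_Icc hremainder y hN
    rwa [hderiv.deriv, abs_of_nonneg hnonneg]
  refine ⟨fun A => (hW A).choose_spec.1.differentiableAt, hbound, fun A y => ?_⟩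
  have hlim : Tendsto (fun N : ℕ => κ / 2 * (A - y) ^ 2 / ((N : ℝ) - 1)) atTop (𝓝 0) :=
    (tendsto_atTop_add_const_right _ _ tendsto_natCast_atTop_atTop).const_div_atTop _
  refine tendsto_iff_dist_tendsto_zero.2
    (squeeze_zero' (Eventually.of_forall fun _ => dist_nonneg) ?_ hlim)
  filter_upwards [eventually_ge_atTop 2] with N hN using hbound A y N hN

/-- `|E_N^cg(A,y) - W'(A)(A-y)| ≤ C (A-y)²/(N-1)` with `C`
depending only on `κ₁, κ₂`; in particular `E_N^cg(A,y) → W'(A)(A-y)`. -/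
theorem coarse_grained_energy_limit_no_forces
    (κ₁ κ₂ : ℝ) (hκ₁ : 0 < κ₁) (hκ : κ₁ ≤ κ₂) :
    ∃ C > 0, ∀ ψ : ℝ → ℝ, ContDiff ℝ 2 ψ →
      (∀ y : ℝ, κ₁ ≤ deriv (deriv ψ) y ∧ deriv (deriv ψ) y ≤ κ₂) →
      (∀ (A y : ℝ) (N : ℕ), 2 ≤ N →
        |EcgN (W ψ) N A y - deriv (W ψ) A * (A - y)| ≤ C * (A - y) ^ 2 / ((N : ℝ) - 1)) ∧
      (∀ A y : ℝ,
        Tendsto (fun N : ℕ => EcgN (W ψ) N A y) atTop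
          (nhds (deriv (W ψ) A * (A - y)))) := by
  refine ⟨κ₂ / 2, half_pos (hκ₁.trans_le hκ), fun ψ hψ hψ'' => ?_⟩
  have hd : Differentiable ℝ ψ := hψ.differentiable two_ne_zero
  have hconvex : StrongConvexOn univ κ₁ ψ :=
    strongConvexOn_univ_of_le_deriv2 hd hψ.differentiable_deriv_two fun y => (hψ'' y).1
  have hconcave : StrongConcaveOn univ (-κ₂) ψ :=
    strongConcaveOn_univ_of_deriv2_le hd hψ.differentiable_deriv_two fun y => by
      simpa using (hψ'' y).2
  exact (coarse_grained_energy_limit_no_forces_general (hκ₁.trans_le hκ) hconcave fun σ => by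
    simpa [mul_comm] using integrable_exp_neg_add_inner hκ₁ hconvex σ).2
end
end

section
/- The thermodynamic limit G_∞(A) of the defect-formation free energy admits the representation G_∞(A) = −log( (∫_ℝ exp(−P(y) − ψ(y) − E^cg(A,y)) dy) / (∫_ℝ exp(−ψ(y) − E^cg(A,y)) dy) ), where E^cg(A,y) = W'(A)·(A − y). -/
/-!
Integrating out the particles one at a time turns the partition function of the chain into the
integral of the weight `exp (-ψ - P)` of the first bond against the `(N - 1)`-fold convolution power
of `exp (-ψ)`, evaluated at `N * A - y`. Tilting by the stress `σ = W' A`, which by Legendre duality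
is the one giving the bonds the mean length `A`, multiplies this convolution power by elementary
factors: one that is the same with and without the defect, and the coarse-grained weight
`exp (-σ * (A - y))`. What is left is the density of a sum of independent bonds within a bounded
distance of its mean, and by the local central limit theorem `√N` times it tends to a constant,
boundedly in `y`. The common factors cancel in the difference of the free energies.
-/

noncomputable section

open MeasureTheory Real Filter

/-- Extend interior degrees of freedom `u : ℝ^(n-1)` to the whole chain via the
boundary conditions `u 0 = 0` and `u n = b`. -/
def bc (n : ℕ) (b : ℝ) (u : Fin (n - 1) → ℝ) : ℕ → ℝ := fun i =>
  if h : 0 < i ∧ i < n then u ⟨i - 1, by omega⟩ else if i = 0 then 0 else b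

/-- The chain energy `∑_{i=1}^n φ_i (u_i - u_{i-1})` with boundary conditions
`u 0 = 0`, `u n = b`. -/
def chainE (φ : ℕ → ℝ → ℝ) (n : ℕ) (b : ℝ) (u : Fin (n - 1) → ℝ) : ℝ :=
  ∑ i ∈ Finset.range n, φ (i + 1) (bc n b u (i + 1) - bc n b u i)

/-- The free energy `-log ∫_{ℝ^{N-1}} exp(-∑ φ_i(u_i-u_{i-1}) - defect(u₁)) du`. -/
def freeEnergy (φ : ℕ → ℝ → ℝ) (defect : ℝ → ℝ) (N : ℕ) (A : ℝ) : ℝ :=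
  - Real.log (∫ u : Fin (N - 1) → ℝ,
      Real.exp (-(chainE φ N (N * A) u) - defect (bc N (N * A) u 1)))

section Plancherel

open scoped FourierTransform SchwartzMap ContDiff

variable {E F : Type*} [NormedAddCommGroup E] [InnerProductSpace ℝ E] [FiniteDimensional ℝ E]
  [MeasurableSpace E] [BorelSpace E]
  [NormedAddCommGroup F] [InnerProductSpace ℂ F] [CompleteSpace F]

-- Both sides are the Fourier transform of `f` as a tempered distribution.
lemma coeFn_fourier_toLp_two_ae_eq {f : E → F} (hf : Integrable f) (hf₂ : MemLp f 2) :
    ((𝓕 (hf₂.toLp f) : Lp F 2 (volume : Measure E)) : E → F) =ᵐ[volume] 𝓕 f := by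
  have hcont : Continuous (𝓕 f) :=
    VectorFourier.fourierIntegral_continuous Real.continuous_fourierChar continuous_inner hf
  refine ae_eq_of_integral_contDiff_smul_eq ((Lp.memLp _).locallyIntegrable one_le_two)
    hcont.locallyIntegrable fun g hg hg' => ?_
  have hgc : HasCompactSupport (Complex.ofRealCLM ∘ g) := hg'.comp_left rfl
  let φ : 𝓢(E, ℂ) := hgc.toSchwartzMap (by fun_prop)
  calc ∫ x, g x • (𝓕 (hf₂.toLp f) : Lp F 2 (volume : Measure E)) x
      = ((𝓕 (hf₂.toLp f) : Lp F 2 (volume : Measure E)) : 𝓢'(E, F)) φ := by simp [φ]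
    _ = ∫ x, 𝓕 φ x • hf₂.toLp f x := by
      rw [← Lp.fourier_toTemperedDistribution_eq, TemperedDistribution.fourier_apply,
        Lp.toTemperedDistribution_apply]
    _ = ∫ x, 𝓕 φ x • f x :=
      integral_congr_ae (hf₂.coeFn_toLp.mono fun x hx => congrArg (𝓕 φ x • ·) hx)
    _ = ∫ x, φ x • 𝓕 f x := by
      simpa using! VectorFourier.integral_fourierIntegral_smul_eq_flip (L := innerₗ E)
        Real.continuous_fourierChar continuous_inner φ.integrable hf
    _ = ∫ x, g x • 𝓕 f x := by simp [φ]

lemma memLp_two_fourier {f : E → F} (hf : Integrable f) (hf₂ : MemLp f 2) : MemLp (𝓕 f) 2 :=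
  (memLp_congr_ae (coeFn_fourier_toLp_two_ae_eq hf hf₂)).1 (Lp.memLp _)

end Plancherel

section GaussianScaling

open scoped Topology

lemma tendsto_sqrt_mul_exp_neg_mul_sub {c : ℝ} (hc : 0 < c) (a : ℝ) :
    Tendsto (fun n : ℕ => √n * exp (-(c * (n - a)))) atTop (𝓝 0) := by
  have h := ((tendsto_rpow_mul_exp_neg_mul_atTop_nhds_zero (1 / 2) c hc).comp
    tendsto_natCast_atTop_atTop).mul_const (exp (c * a))
  rw [zero_mul] at h
  refine h.congr fun n => ?_
  rw [Function.comp_apply, ← sqrt_eq_rpow, mul_assoc, ← exp_add]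
  ring_nf

variable {f : ℝ → ℂ} {c : ℝ}

lemma norm_pow_le_of_le_exp_neg_min (hf : ∀ t, ‖f t‖ ≤ exp (-(c * min 1 (t ^ 2)))) {n : ℕ}
    {t : ℝ} (ht : t ^ 2 ≤ 1) : ‖f t‖ ^ n ≤ exp (-(c * n) * t ^ 2) := by
  calc ‖f t‖ ^ n ≤ exp (-(c * min 1 (t ^ 2))) ^ n := by gcongr; exact hf t
    _ = exp (-(c * n) * t ^ 2) := by rw [min_eq_right ht, ← exp_nat_mul]; ring_nf

lemma norm_pow_le_mul_sq_of_le_exp_neg_min (hf : ∀ t, ‖f t‖ ≤ exp (-(c * min 1 (t ^ 2))))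
    {n : ℕ} (hn : 2 ≤ n) {t : ℝ} (ht : 1 ≤ t ^ 2) :
    ‖f t‖ ^ n ≤ exp (-(c * (n - 2))) * ‖f t‖ ^ 2 := by
  obtain ⟨k, rfl⟩ := Nat.exists_eq_add_of_le' hn
  have hft : ‖f t‖ ^ k ≤ exp (-c) ^ k := by
    gcongr
    simpa [min_eq_left ht] using hf t
  rw [pow_add, Nat.cast_add, Nat.cast_ofNat, add_sub_cancel_right]
  gcongr
  rwa [← exp_nat_mul, mul_neg, mul_comm] at hft

lemma norm_pow_le_gaussian_add (hf : ∀ t, ‖f t‖ ≤ exp (-(c * min 1 (t ^ 2)))) {n : ℕ}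
    (hn : 2 ≤ n) (t : ℝ) :
    ‖f t‖ ^ n ≤ exp (-(c * n) * t ^ 2) + exp (-(c * (n - 2))) * ‖f t‖ ^ 2 := by
  rcases le_total (t ^ 2) 1 with ht | ht
  · exact (norm_pow_le_of_le_exp_neg_min hf ht).trans (le_add_of_nonneg_right (by positivity))
  · exact (norm_pow_le_mul_sq_of_le_exp_neg_min hf hn ht).trans
      (le_add_of_nonneg_left (by positivity))

lemma integrable_norm_pow_of_le_exp_neg_min (hc : 0 < c) (hfc : Continuous f)
    (hf : ∀ t, ‖f t‖ ≤ exp (-(c * min 1 (t ^ 2)))) (hf₂ : Integrable fun t => ‖f t‖ ^ 2)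
    {n : ℕ} (hn : 2 ≤ n) : Integrable fun t => ‖f t‖ ^ n := by
  refine hf₂.mono' (hfc.norm.pow n).aestronglyMeasurable (ae_of_all _ fun t => ?_)
  have hft : ‖f t‖ ≤ 1 := (hf t).trans (exp_le_one_iff.2 (neg_nonpos.2 (by positivity)))
  rw [norm_pow, norm_norm]
  exact pow_le_pow_of_le_one (norm_nonneg _) hft hn

lemma exists_sqrt_mul_integral_norm_pow_le (hc : 0 < c) (hfc : Continuous f)
    (hf : ∀ t, ‖f t‖ ≤ exp (-(c * min 1 (t ^ 2)))) (hf₂ : Integrable fun t => ‖f t‖ ^ 2) :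
    ∃ C, ∀ n : ℕ, 2 ≤ n → √n * ∫ t, ‖f t‖ ^ n ≤ C := by
  obtain ⟨D, hD⟩ := (tendsto_sqrt_mul_exp_neg_mul_sub hc 2).bddAbove_range
  refine ⟨√(π / c) + D * ∫ t, ‖f t‖ ^ 2, fun n hn => ?_⟩
  have hcn : 0 < c * n := by positivity
  have hn₀ : (0 : ℝ) < n := by positivity
  have hgauss := integrable_exp_neg_mul_sq hcn
  calc √n * ∫ t, ‖f t‖ ^ n
      ≤ √n * ∫ t, (exp (-(c * n) * t ^ 2) + exp (-(c * (n - 2))) * ‖f t‖ ^ 2) := by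
        gcongr
        · exact integrable_norm_pow_of_le_exp_neg_min hc hfc hf hf₂ hn
        · exact hgauss.add (hf₂.const_mul _)
        · exact fun t => norm_pow_le_gaussian_add hf hn t
    _ = √(π / c) + √n * exp (-(c * (n - 2))) * ∫ t, ‖f t‖ ^ 2 := by
        rw [integral_add hgauss (hf₂.const_mul _), integral_const_mul, integral_gaussian,
          mul_add, ← sqrt_mul hn₀.le, mul_assoc]
        congr 2
        field_simp
    _ ≤ √(π / c) + D * ∫ t, ‖f t‖ ^ 2 := by
        gcongr
        exact hD ⟨n, rfl⟩

variable {h : ℝ → ℂ}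

lemma tendsto_sqrt_mul_setIntegral_pow_mul_far (hc : 0 < c)
    (hf : ∀ t, ‖f t‖ ≤ exp (-(c * min 1 (t ^ 2)))) (hf₂ : Integrable fun t => ‖f t‖ ^ 2)
    (hh : ∀ t, ‖h t‖ ≤ 1) :
    Tendsto (fun n : ℕ => √n * ∫ t in {t | t ^ 2 ≤ 1}ᶜ, f t ^ n * h t) atTop (𝓝 0) := by
  have hlim := (tendsto_sqrt_mul_exp_neg_mul_sub hc 2).mul_const (∫ t, ‖f t‖ ^ 2)
  rw [zero_mul] at hlim
  refine squeeze_zero_norm' ?_ hlim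
  filter_upwards [eventually_ge_atTop 2] with n hn
  rw [norm_mul, Complex.norm_real, norm_of_nonneg (sqrt_nonneg _), mul_assoc,
    ← integral_const_mul]
  gcongr
  refine (norm_integral_le_of_norm_le (hf₂.const_mul _).restrict ?_).trans
    (setIntegral_le_integral (hf₂.const_mul _) (ae_of_all _ fun t => by positivity))
  refine ae_restrict_of_forall_mem (measurableSet_le (by fun_prop) (by fun_prop)).compl
    fun t (ht : ¬t ^ 2 ≤ 1) => ?_
  calc ‖f t ^ n * h t‖ ≤ ‖f t‖ ^ n := by
        rw [norm_mul, norm_pow]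
        exact mul_le_of_le_one_right (by positivity) (hh t)
    _ ≤ _ := norm_pow_le_mul_sq_of_le_exp_neg_min hf hn (not_le.1 ht).le

lemma tendsto_sqrt_mul_setIntegral_pow_mul_near (hc : 0 < c) (hfc : Continuous f)
    (hf : ∀ t, ‖f t‖ ≤ exp (-(c * min 1 (t ^ 2)))) {g : ℝ → ℂ}
    (hfg : ∀ s, Tendsto (fun n : ℕ => f (s / √n) ^ n) atTop (𝓝 (g s)))
    (hhc : Continuous h) (hh : ∀ t, ‖h t‖ ≤ 1) :
    Tendsto (fun n : ℕ => √n * ∫ t in {t | t ^ 2 ≤ 1}, f t ^ n * h t) atTop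
      (𝓝 (∫ s, g s * h 0)) := by
  have hS : MeasurableSet {t : ℝ | t ^ 2 ≤ 1} := measurableSet_le (by fun_prop) (by fun_prop)
  have hscale : ∀ s : ℝ, Tendsto (fun n : ℕ => s / √n) atTop (𝓝 0) := fun s =>
    tendsto_const_nhds.div_atTop (tendsto_sqrt_atTop.comp tendsto_natCast_atTop_atTop)
  let k (n : ℕ) : ℝ → ℂ := {t | t ^ 2 ≤ 1}.indicator fun t => f t ^ n * h t
  have hk_bound : ∀ n t, ‖k n t‖ ≤ exp (-(c * n) * t ^ 2) := by
    intro n t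
    rw [norm_indicator_eq_indicator_norm]
    refine Set.indicator_apply_le' (fun ht => ?_) fun _ => (exp_pos _).le
    rw [norm_mul, norm_pow]
    exact (mul_le_of_le_one_right (by positivity) (hh t)).trans
      (norm_pow_le_of_le_exp_neg_min hf ht)
  have hk : ∀ n : ℕ, √n * ∫ t in {t | t ^ 2 ≤ 1}, f t ^ n * h t = ∫ s, k n (s / √n) := by
    intro n
    rw [Measure.integral_comp_div, integral_indicator hS, abs_of_nonneg (sqrt_nonneg _),
      Complex.real_smul]
  simp_rw [hk]
  refine tendsto_integral_filter_of_dominated_convergence (fun s => exp (-c * s ^ 2))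
    (.of_forall fun n => ?_) ?_ (integrable_exp_neg_mul_sq hc) (ae_of_all _ fun s => ?_)
  · have : Measurable (k n) := by
      refine Measurable.indicator ?_ hS
      exact ((hfc.pow n).mul hhc).measurable
    exact (this.comp (measurable_id.div_const _)).aestronglyMeasurable
  · filter_upwards [eventually_gt_atTop 0] with n hn
    refine ae_of_all _ fun s => ?_
    refine (hk_bound n (s / √n)).trans_eq ?_
    rw [div_pow, sq_sqrt n.cast_nonneg]
    field_simp
  · have hnear : ∀ᶠ n : ℕ in atTop, (s / √n) ^ 2 ≤ 1 :=
      ((hscale s).pow 2).eventually_le_const (by norm_num)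
    refine Tendsto.congr' ?_ ((hfg s).mul ((hhc.tendsto 0).comp (hscale s)))
    filter_upwards [hnear] with n hn
    exact (Set.indicator_of_mem (s := {t : ℝ | t ^ 2 ≤ 1}) hn fun t => f t ^ n * h t).symm

lemma tendsto_sqrt_mul_integral_pow_mul (hc : 0 < c) (hfc : Continuous f)
    (hf : ∀ t, ‖f t‖ ≤ exp (-(c * min 1 (t ^ 2)))) (hf₂ : Integrable fun t => ‖f t‖ ^ 2)
    {g : ℝ → ℂ} (hfg : ∀ s, Tendsto (fun n : ℕ => f (s / √n) ^ n) atTop (𝓝 (g s)))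
    (hhc : Continuous h) (hh : ∀ t, ‖h t‖ ≤ 1) :
    Tendsto (fun n : ℕ => √n * ∫ t, f t ^ n * h t) atTop (𝓝 (∫ s, g s * h 0)) := by
  have hlim := (tendsto_sqrt_mul_setIntegral_pow_mul_near hc hfc hf hfg hhc hh).add
    (tendsto_sqrt_mul_setIntegral_pow_mul_far hc hf hf₂ hh)
  rw [add_zero] at hlim
  refine hlim.congr' ?_
  filter_upwards [eventually_ge_atTop 2] with n hn
  rw [← mul_add, integral_add_compl (measurableSet_le (by fun_prop) (by fun_prop))]
  refine (integrable_norm_pow_of_le_exp_neg_min hc hfc hf hf₂ hn).mono'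
    (by fun_prop) (ae_of_all _ fun t => ?_)
  rw [norm_mul, norm_pow]
  exact mul_le_of_le_one_right (by positivity) (hh t)

end GaussianScaling

section CharFun

open scoped Topology

variable {μ : Measure ℝ} [IsProbabilityMeasure μ]

-- If `‖charFun μ t‖ = 1` then `exp (i t x)` is `μ`-almost surely constant, whence
-- `‖charFun μ (k * t)‖ = 1` for all `k`.
lemma norm_charFun_lt_one_of_tendsto_zero (hμ : Tendsto (charFun μ) (cocompact ℝ) (𝓝 0))
    {t : ℝ} (ht : t ≠ 0) : ‖charFun μ t‖ < 1 := by
  have hbound : ∀ᵐ x : ℝ ∂μ, ‖Complex.exp (t * x * Complex.I)‖ ≤ 1 := ae_of_all _ fun x => by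
    rw [← Complex.ofReal_mul, Complex.norm_exp_ofReal_mul_I]
  rcases ae_eq_const_or_norm_integral_lt_of_norm_le_const hbound with hconst | hlt
  · have hpow : ∀ k : ℕ, charFun μ (k * t) = charFun μ t ^ k := fun k => by
      rw [average_eq_integral, ← charFun_apply_real] at hconst
      rw [charFun_apply_real, integral_congr_ae (g := fun _ => charFun μ t ^ k)]
      · simp
      filter_upwards [hconst] with x hx
      rw [← show _ = charFun μ t from hx, ← Complex.exp_nat_mul]
      push_cast
      ring_nf
    have hlim : Tendsto (fun k : ℕ => charFun μ t ^ k) atTop (𝓝 0) := by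
      simp_rw [← hpow]
      rw [← Metric.cobounded_eq_cocompact] at hμ
      refine hμ.comp (tendsto_norm_atTop_iff_cobounded.1 ?_)
      simpa [norm_mul] using tendsto_natCast_atTop_atTop.atTop_mul_const (abs_pos.2 ht)
    exact tendsto_pow_atTop_nhds_zero_iff_norm_lt_one.1 hlim
  · simpa [charFun_apply_real] using hlt

lemma exists_norm_charFun_le_of_le_abs (hμ : Tendsto (charFun μ) (cocompact ℝ) (𝓝 0))
    {δ : ℝ} (hδ : 0 < δ) : ∃ q ∈ Set.Ioo (0 : ℝ) 1, ∀ t, δ ≤ |t| → ‖charFun μ t‖ ≤ q := by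
  have hfar : ∀ᶠ t in cocompact ℝ, ‖charFun μ t‖ < 1 / 2 :=
    hμ.norm.eventually_lt_const (by norm_num)
  obtain ⟨K, hK, hKfar⟩ := mem_cocompact.1 hfar
  have hS : IsCompact (K ∩ {t | δ ≤ |t|}) :=
    hK.inter_right (isClosed_le continuous_const continuous_abs)
  obtain ⟨q, hq, hKnear⟩ : ∃ q < 1, ∀ t ∈ K ∩ {t | δ ≤ |t|}, ‖charFun μ t‖ ≤ q := by
    rcases (K ∩ {t | δ ≤ |t|}).eq_empty_or_nonempty with hempty | hne
    · exact ⟨0, one_pos, by simp [hempty]⟩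
    obtain ⟨s, hs, hmax⟩ := hS.exists_isMaxOn hne
      (continuous_charFun (μ := μ)).norm.continuousOn
    exact ⟨_, norm_charFun_lt_one_of_tendsto_zero hμ (abs_pos.1 (hδ.trans_le hs.2)), hmax⟩
  refine ⟨max (1 / 2) q, ⟨by simp, by simp [hq, show (2⁻¹ : ℝ) < 1 by norm_num]⟩,
    fun t ht => ?_⟩
  by_cases htK : t ∈ K
  · exact (hKnear t ⟨htK, ht⟩).trans (le_max_right _ _)
  · exact (hKfar htK).le.trans (le_max_left _ _)

lemma eventually_norm_charFun_le_exp (h0 : ∫ x, x ∂μ = 0) (h1 : ∫ x, x ^ 2 ∂μ = 1) :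
    ∀ᶠ t in 𝓝 0, ‖charFun μ t‖ ≤ exp (-(1 / 4 * t ^ 2)) := by
  have htaylor := (taylor_charFun_two (X := id) aemeasurable_id h0 h1).bound
    (c := 1 / 4) (by norm_num)
  rw [Measure.map_id] at htaylor
  have hsmall : ∀ᶠ t : ℝ in 𝓝 0, t ^ 2 ≤ 2 :=
    ((continuous_pow 2).tendsto' (0 : ℝ) 0 (by norm_num)).eventually_le_const two_pos
  filter_upwards [htaylor, hsmall] with t ht ht2
  have hreal : ‖(1 - t ^ 2 / 2 : ℂ)‖ = 1 - t ^ 2 / 2 := by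
    rw [← Complex.norm_of_nonneg (by linarith : 0 ≤ 1 - t ^ 2 / 2)]
    push_cast
    rfl
  calc ‖charFun μ t‖ ≤ ‖charFun μ t - (1 - t ^ 2 / 2)‖ + ‖(1 - t ^ 2 / 2 : ℂ)‖ :=
        norm_le_norm_sub_add _ _
    _ ≤ 1 / 4 * t ^ 2 + (1 - t ^ 2 / 2) := by
        rw [hreal]
        gcongr
        simpa using ht
    _ ≤ exp (-(1 / 4 * t ^ 2)) := by linarith [add_one_le_exp (-(1 / 4 * t ^ 2))]

lemma exists_norm_charFun_le_exp_neg_min (h0 : ∫ x, x ∂μ = 0) (h1 : ∫ x, x ^ 2 ∂μ = 1)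
    (hμ : Tendsto (charFun μ) (cocompact ℝ) (𝓝 0)) :
    ∃ c > 0, ∀ t, ‖charFun μ t‖ ≤ exp (-(c * min 1 (t ^ 2))) := by
  obtain ⟨δ, hδ, hnear⟩ := Metric.eventually_nhds_iff.1 (eventually_norm_charFun_le_exp h0 h1)
  obtain ⟨q, ⟨hq0, hq1⟩, hfar⟩ := exists_norm_charFun_le_of_le_abs hμ hδ
  refine ⟨min (1 / 4) (-log q), by simp [log_neg hq0 hq1], fun t => ?_⟩
  rcases lt_or_ge |t| δ with ht | ht
  · refine (hnear (by simpa using ht)).trans (exp_le_exp.2 (neg_le_neg ?_))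
    exact mul_le_mul (min_le_left _ _) (min_le_right _ _) (by positivity) (by norm_num)
  · refine (hfar t ht).trans ((log_le_iff_le_exp hq0).1 (le_neg.1 ?_))
    calc min (1 / 4) (-log q) * min 1 (t ^ 2) ≤ -log q * 1 :=
          mul_le_mul (min_le_right _ _) (min_le_left _ _) (by positivity)
            (neg_nonneg.2 (log_nonpos hq0.le hq1.le))
      _ = -log q := mul_one _

end CharFun

section ConvolutionPowers

open scoped Convolution FourierTransform

/-- `convPow f n` is the `(n + 1)`-fold convolution power `f ⋆ ⋯ ⋆ f` of `f`. -/
def convPow (f : ℝ → ℝ) : ℕ → ℝ → ℝ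
  | 0 => f
  | n + 1 => f ⋆[ContinuousLinearMap.mul ℝ ℝ] convPow f n

variable {f : ℝ → ℝ}

lemma convPow_zero (f : ℝ → ℝ) : convPow f 0 = f := rfl

lemma convPow_succ_apply (f : ℝ → ℝ) (n : ℕ) (x : ℝ) :
    convPow f (n + 1) x = ∫ y, f y * convPow f n (x - y) := rfl

lemma convPow_nonneg (hf : 0 ≤ f) (n : ℕ) (x : ℝ) : 0 ≤ convPow f n x := by
  induction n generalizing x with
  | zero => exact hf x
  | succ n ih => exact integral_nonneg fun y => mul_nonneg (hf y) (ih _)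

lemma integrable_convPow (hf : Integrable f) (n : ℕ) : Integrable (convPow f n) := by
  induction n with
  | zero => exact hf
  | succ n ih => exact hf.integrable_convolution _ ih

lemma abs_convPow_le (hf : Integrable f) {B : ℝ} (hB : ∀ x, |f x| ≤ B) (n : ℕ) (x : ℝ) :
    |convPow f n x| ≤ (∫ y, |f y|) ^ n * B := by
  induction n generalizing x with
  | zero => simpa [convPow_zero] using hB x
  | succ n ih =>
    rw [convPow_succ_apply, pow_succ', mul_assoc, ← integral_mul_const]
    refine norm_integral_le_of_norm_le (f := fun y => f y * convPow f n (x - y))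
      (hf.abs.mul_const _) (ae_of_all _ fun y => ?_)
    rw [norm_mul]
    exact mul_le_mul_of_nonneg_left (ih _) (norm_nonneg _)

lemma continuous_convPow (hf : Integrable f) (hfc : Continuous f) {B : ℝ}
    (hB : ∀ x, |f x| ≤ B) (n : ℕ) : Continuous (convPow f n) := by
  induction n with
  | zero => exact hfc
  | succ n ih =>
    refine BddAbove.continuous_convolution_right_of_integrable _ ?_ hf ih
    exact ⟨_, Set.forall_mem_range.2 fun x => abs_convPow_le hf hB n x⟩

lemma ofReal_convPow_succ (hf : Integrable f) (hfc : Continuous f) (hf₀ : 0 ≤ f) {B : ℝ}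
    (hB : ∀ x, |f x| ≤ B) (n : ℕ) :
    (fun x => ENNReal.ofReal (convPow f (n + 1) x)) =
      (fun x => ENNReal.ofReal (f x)) ⋆ₗ fun x => ENNReal.ofReal (convPow f n x) := by
  ext x
  have hcont := continuous_convPow hf hfc hB n
  have hint : Integrable fun y => f y * convPow f n (x - y) :=
    hf.mul_bdd (by fun_prop) (ae_of_all _ fun y => abs_convPow_le hf hB n (x - y))
  rw [convPow_succ_apply, ofReal_integral_eq_lintegral_ofReal hint
    (ae_of_all _ fun y => mul_nonneg (hf₀ y) (convPow_nonneg hf₀ n _)), lconvolution_def]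
  simp only [ENNReal.ofReal_mul (hf₀ _), sub_eq_neg_add]

lemma fourier_convPow (hf : Integrable f) (n : ℕ) (t : ℝ) :
    𝓕 (fun x => (convPow f n x : ℂ)) t = 𝓕 (fun x => (f x : ℂ)) t ^ (n + 1) := by
  induction n with
  | zero => simp [convPow_zero]
  | succ n ih =>
    have hf' : Integrable fun x => (f x : ℂ) := hf.ofReal
    have hfn : Integrable fun x => (convPow f n x : ℂ) := (integrable_convPow hf n).ofReal
    have hconv : (fun x => (convPow f (n + 1) x : ℂ)) =
        (fun x => (f x : ℂ)) ⋆[ContinuousLinearMap.mul ℂ ℂ] fun x => (convPow f n x : ℂ) := by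
      ext x
      rw [convPow_succ_apply, ← integral_complex_ofReal]
      simp [convolution_def]
    rw [pow_succ', ← ih, ← Real.fourier_mul_convolution_eq hf' hfn, hconv]

lemma convPow_eq_integral_fourier (hf : Integrable f) (hfc : Continuous f) {B : ℝ}
    (hB : ∀ x, |f x| ≤ B) {n : ℕ}
    (hint : Integrable fun t => 𝓕 (fun x => (f x : ℂ)) t ^ (n + 1)) (x : ℝ) :
    (convPow f n x : ℂ) =
      ∫ t, 𝓕 (fun x => (f x : ℂ)) t ^ (n + 1) * Complex.exp (2 * π * t * x * Complex.I) := by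
  have hfourier := funext (fourier_convPow hf n)
  have hinv := Continuous.fourierInv_fourier_eq (f := fun x => (convPow f n x : ℂ))
    (Complex.continuous_ofReal.comp (continuous_convPow hf hfc hB n))
    (integrable_convPow hf n).ofReal (by rwa [hfourier])
  rw [← congrFun hinv x, hfourier, Real.fourierInv_eq']
  refine integral_congr_ae (ae_of_all _ fun t => ?_)
  simp only [smul_eq_mul, RCLike.inner_apply, conj_trivial]
  push_cast
  ring_nf

end ConvolutionPowers

section Standardization

open ProbabilityTheory
open scoped Topology

/-- The law of `(x - m) / √v` under `μ`, where `m` and `v` are the mean and the variance of `μ`. -/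
def standardized (μ : Measure ℝ) : Measure ℝ :=
  μ.map fun x => (√Var[id; μ])⁻¹ * (x - ∫ y, y ∂μ)

variable {μ : Measure ℝ}

instance [IsProbabilityMeasure μ] : IsProbabilityMeasure (standardized μ) :=
  Measure.isProbabilityMeasure_map (by fun_prop)

lemma charFun_standardized (s : ℝ) :
    charFun (standardized μ) s = charFun μ ((√Var[id; μ])⁻¹ * s) *
      Complex.exp (-((√Var[id; μ])⁻¹ * s * (∫ y, y ∂μ) * Complex.I)) := by
  rw [standardized, charFun_apply_real, integral_map (by fun_prop) (by fun_prop),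
    charFun_apply_real, ← integral_mul_const]
  refine integral_congr_ae (ae_of_all _ fun x => ?_)
  simp only [← Complex.exp_add]
  push_cast
  ring_nf

lemma norm_charFun_standardized (s : ℝ) :
    ‖charFun (standardized μ) s‖ = ‖charFun μ ((√Var[id; μ])⁻¹ * s)‖ := by
  have hunit : ‖Complex.exp (-((√Var[id; μ])⁻¹ * s * (∫ y, y ∂μ) * Complex.I))‖ = 1 := by
    rw [← neg_mul]
    exact_mod_cast Complex.norm_exp_ofReal_mul_I _
  rw [charFun_standardized, norm_mul, hunit, mul_one]

lemma charFun_pow_eq_charFun_standardized (hv : 0 < Var[id; μ]) (n : ℕ) (t : ℝ) :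
    charFun μ t ^ n = charFun (standardized μ) (√Var[id; μ] * t) ^ n *
      Complex.exp (t * (n * ∫ y, y ∂μ) * Complex.I) := by
  have hinv : (√Var[id; μ])⁻¹ * (√Var[id; μ] * t) = t :=
    inv_mul_cancel_left₀ (sqrt_pos.2 hv).ne' t
  have hinv' : ((√Var[id; μ])⁻¹ * (√Var[id; μ] * t : ℝ) : ℂ) = t := by exact_mod_cast hinv
  rw [charFun_standardized, hinv, hinv', mul_pow, ← Complex.exp_nat_mul, mul_assoc,
    ← Complex.exp_add]
  simp [mul_assoc, mul_left_comm]

lemma integral_sq_standardized (hv : 0 < Var[id; μ]) : ∫ x, x ^ 2 ∂standardized μ = 1 := by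
  rw [standardized, integral_map (by fun_prop) (by fun_prop)]
  simp_rw [mul_pow]
  rw [integral_const_mul, inv_pow, sq_sqrt hv.le]
  exact (congrArg _ (variance_eq_integral aemeasurable_id).symm).trans (inv_mul_cancel₀ hv.ne')

lemma tendsto_charFun_standardized_cocompact (hv : 0 < Var[id; μ])
    (hμ : Tendsto (charFun μ) (cocompact ℝ) (𝓝 0)) :
    Tendsto (charFun (standardized μ)) (cocompact ℝ) (𝓝 0) := by
  refine tendsto_zero_iff_norm_tendsto_zero.2 ?_
  simp_rw [norm_charFun_standardized]
  have hscale := tendsto_cocompact_mul_left₀ (inv_ne_zero (sqrt_pos.2 hv).ne')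
  exact (tendsto_zero_iff_norm_tendsto_zero.1 hμ).comp hscale

lemma integrable_norm_charFun_standardized_sq (hv : 0 < Var[id; μ])
    (hμ : Integrable fun t => ‖charFun μ t‖ ^ 2) :
    Integrable fun t => ‖charFun (standardized μ) t‖ ^ 2 := by
  simp_rw [norm_charFun_standardized]
  exact hμ.comp_mul_left' (inv_ne_zero (sqrt_pos.2 hv).ne')

variable [IsProbabilityMeasure μ]

lemma integral_id_standardized (hμ : MemLp id 2 μ) : ∫ x, x ∂standardized μ = 0 := by
  rw [standardized, integral_map (by fun_prop) (by fun_prop), integral_const_mul,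
    integral_sub (f := fun x => x) (hμ.integrable one_le_two) (integrable_const _)]
  simp

lemma exists_norm_charFun_standardized_le (hμ : MemLp id 2 μ) (hv : 0 < Var[id; μ])
    (hlim : Tendsto (charFun μ) (cocompact ℝ) (𝓝 0)) :
    ∃ c > 0, ∀ t, ‖charFun (standardized μ) t‖ ≤ exp (-(c * min 1 (t ^ 2))) :=
  exists_norm_charFun_le_exp_neg_min (integral_id_standardized hμ) (integral_sq_standardized hv)
    (tendsto_charFun_standardized_cocompact hv hlim)

lemma tendsto_charFun_standardized_div_sqrt_pow (hμ : MemLp id 2 μ) (hv : 0 < Var[id; μ])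
    (s : ℝ) : Tendsto (fun n : ℕ => charFun (standardized μ) (s / √n) ^ n) atTop
      (𝓝 (exp (-(1 / 2) * s ^ 2) : ℝ)) := by
  have hclt := tendsto_charFun_inv_sqrt_mul_pow (P := standardized μ) (X := id) aemeasurable_id
    (integral_id_standardized hμ) (integral_sq_standardized hv) s
  rw [Measure.map_id] at hclt
  convert! hclt using 2
  · simp [div_eq_inv_mul]
  · push_cast
    ring_nf

end Standardization

section LocalLimit

open ProbabilityTheory
open scoped FourierTransform Topology

/-- `p` is a bounded continuous density of `μ` with respect to Lebesgue measure. -/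
structure IsBoundedDensity (p : ℝ → ℝ) (μ : Measure ℝ) : Prop where
  continuous : Continuous p
  nonneg : 0 ≤ p
  exists_le : ∃ B, ∀ x, p x ≤ B
  eq_withDensity : μ = volume.withDensity fun x => ENNReal.ofReal (p x)

namespace IsBoundedDensity

variable {p : ℝ → ℝ} {μ : Measure ℝ}

lemma exists_abs_le (hp : IsBoundedDensity p μ) : ∃ B, ∀ x, |p x| ≤ B := by
  simpa only [abs_of_nonneg (hp.nonneg _)] using hp.exists_le

lemma integral_eq (hp : IsBoundedDensity p μ) {F : Type*} [NormedAddCommGroup F]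
    [NormedSpace ℝ F] (f : ℝ → F) : ∫ x, f x ∂μ = ∫ x, p x • f x := by
  have hpm := hp.continuous.measurable
  rw [hp.eq_withDensity, integral_withDensity_eq_integral_toReal_smul (by fun_prop)
    (ae_of_all _ fun _ => ENNReal.ofReal_lt_top)]
  simp_rw [ENNReal.toReal_ofReal (hp.nonneg _)]

lemma charFun_eq_fourier (hp : IsBoundedDensity p μ) (t : ℝ) :
    charFun μ t = 𝓕 (fun x => (p x : ℂ)) (-(2 * π)⁻¹ * t) := by
  rw [charFun_apply_real, hp.integral_eq, Real.fourier_real_eq_integral_exp_smul]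
  refine integral_congr_ae (ae_of_all _ fun x => ?_)
  have hexp : (-2 * π * x * (-(2 * π)⁻¹ * t) : ℝ) = t * x := by field_simp
  simp only [hexp, Complex.real_smul, smul_eq_mul]
  push_cast
  ring

lemma tendsto_charFun_cocompact (hp : IsBoundedDensity p μ) :
    Tendsto (charFun μ) (cocompact ℝ) (𝓝 0) := by
  rw [funext hp.charFun_eq_fourier]
  exact (Real.zero_at_infty_fourier _).comp
    (tendsto_cocompact_mul_left₀ (neg_ne_zero.2 (inv_ne_zero two_pi_pos.ne')))

variable [IsProbabilityMeasure μ]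

lemma integrable (hp : IsBoundedDensity p μ) : Integrable p := by
  refine (lintegral_ofReal_ne_top_iff_integrable hp.continuous.aestronglyMeasurable
    (ae_of_all _ hp.nonneg)).1 ?_
  rw [← setLIntegral_univ, ← withDensity_apply _ .univ, ← hp.eq_withDensity]
  exact measure_ne_top μ _

lemma integrable_norm_charFun_sq (hp : IsBoundedDensity p μ) :
    Integrable fun t => ‖charFun μ t‖ ^ 2 := by
  obtain ⟨B, hB⟩ := hp.exists_abs_le
  have hp₁ : Integrable fun x => (p x : ℂ) := hp.integrable.ofReal
  have hp₂ : MemLp (fun x => (p x : ℂ)) 2 := by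
    refine (memLp_two_iff_integrable_sq_norm hp₁.aestronglyMeasurable).2 ?_
    simpa [sq] using hp.integrable.mul_bdd hp.continuous.aestronglyMeasurable (ae_of_all _ hB)
  simp_rw [hp.charFun_eq_fourier]
  exact ((memLp_two_fourier hp₁ hp₂).integrable_norm_pow two_ne_zero).comp_mul_left'
    (neg_ne_zero.2 (inv_ne_zero two_pi_pos.ne'))

lemma integrable_charFun_pow (hp : IsBoundedDensity p μ) {n : ℕ} (hn : 2 ≤ n) :
    Integrable fun t => charFun μ t ^ n := by
  refine hp.integrable_norm_charFun_sq.mono' (by fun_prop) (ae_of_all _ fun t => ?_)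
  rw [norm_pow]
  exact pow_le_pow_of_le_one (norm_nonneg _) (norm_charFun_le_one t) hn

lemma convPow_eq_integral_charFun (hp : IsBoundedDensity p μ) {n : ℕ} (hn : 1 ≤ n) (x : ℝ) :
    (convPow p n x : ℂ) =
      (2 * π : ℝ)⁻¹ • ∫ t, charFun μ t ^ (n + 1) * Complex.exp (-(t * x * Complex.I)) := by
  obtain ⟨B, hB⟩ := hp.exists_abs_le
  have hscale : -(2 * π) ≠ 0 := by simp [pi_ne_zero]
  have hfourier : ∀ t, 𝓕 (fun x => (p x : ℂ)) t = charFun μ (-(2 * π) * t) := fun t => by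
    rw [hp.charFun_eq_fourier]
    field_simp
  have hint : Integrable fun t => 𝓕 (fun x => (p x : ℂ)) t ^ (n + 1) := by
    simpa only [hfourier] using (hp.integrable_charFun_pow (by omega)).comp_mul_left' hscale
  rw [convPow_eq_integral_fourier hp.integrable hp.continuous hB hint, ← abs_of_pos two_pi_pos,
    ← abs_neg, ← abs_inv, ← Measure.integral_comp_mul_left]
  refine integral_congr_ae (ae_of_all _ fun t => ?_)
  simp only [hfourier]
  push_cast
  ring_nf

lemma convPow_add_mul_mean_eq (hp : IsBoundedDensity p μ) (hv : 0 < Var[id; μ]) {n : ℕ}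
    (hn : 1 ≤ n) (x : ℝ) :
    (convPow p n (x + (n + 1) * ∫ y, y ∂μ) : ℂ) =
      (2 * π * √Var[id; μ] : ℝ)⁻¹ • ∫ s, charFun (standardized μ) s ^ (n + 1) *
        Complex.exp ((-x / √Var[id; μ] * s : ℝ) * Complex.I) := by
  have hsqrt := sqrt_pos.2 hv
  rw [hp.convPow_eq_integral_charFun hn, mul_inv (2 * π), mul_smul,
    ← abs_of_pos (inv_pos.2 hsqrt), ← Measure.integral_comp_mul_left]
  refine congrArg _ (integral_congr_ae (ae_of_all _ fun t => ?_))
  have hphase : (-x / √Var[id; μ] * (√Var[id; μ] * t) : ℝ) = -x * t := by field_simp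
  simp only [charFun_pow_eq_charFun_standardized hv, hphase, mul_assoc, ← Complex.exp_add]
  push_cast
  ring_nf

lemma tendsto_sqrt_mul_convPow (hp : IsBoundedDensity p μ) (hμ : MemLp id 2 μ)
    (hv : 0 < Var[id; μ]) (x : ℝ) :
    Tendsto (fun n : ℕ => √(n + 1) * convPow p n (x + (n + 1) * ∫ y, y ∂μ)) atTop
      (𝓝 (√(2 * π * Var[id; μ]))⁻¹) := by
  obtain ⟨c, hc, hbound⟩ :=
    exists_norm_charFun_standardized_le hμ hv hp.tendsto_charFun_cocompact
  have hsq := integrable_norm_charFun_standardized_sq hv hp.integrable_norm_charFun_sq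
  have hlim := tendsto_sqrt_mul_integral_pow_mul hc continuous_charFun hbound hsq
    (tendsto_charFun_standardized_div_sqrt_pow hμ hv)
    (h := fun s => Complex.exp ((-x / √Var[id; μ] * s : ℝ) * Complex.I)) (by fun_prop)
    fun s => (Complex.norm_exp_ofReal_mul_I _).le
  have hlim' := ((tendsto_add_atTop_iff_nat 1).2 hlim).const_smul (2 * π * √Var[id; μ] : ℝ)⁻¹
  have hgauss : (2 * π * √Var[id; μ] : ℝ)⁻¹ • (∫ s : ℝ, ((exp (-(1 / 2) * s ^ 2) : ℝ) : ℂ) *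
      Complex.exp ((-x / √Var[id; μ] * 0 : ℝ) * Complex.I)) =
      ((√(2 * π * Var[id; μ]))⁻¹ : ℝ) := by
    have hconst : (2 * π * √Var[id; μ])⁻¹ * √(π / (1 / 2)) = (√(2 * π * Var[id; μ]))⁻¹ := by
      rw [sqrt_mul two_pi_pos.le, mul_inv (2 * π), mul_inv √(2 * π),
        ← sqrt_div_self (x := 2 * π), show π / (1 / 2) = 2 * π by ring]
      ring
    simp only [mul_zero, Complex.ofReal_zero, zero_mul, Complex.exp_zero, mul_one]
    rw [integral_complex_ofReal, integral_gaussian, Complex.real_smul, ← Complex.ofReal_mul,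
      hconst]
  rw [← tendsto_ofReal_iff, ← hgauss]
  refine hlim'.congr' ?_
  filter_upwards [eventually_ge_atTop 1] with n hn
  rw [Complex.ofReal_mul, hp.convPow_add_mul_mean_eq hv hn, mul_smul_comm, Nat.cast_add_one]

lemma exists_sqrt_mul_convPow_le (hp : IsBoundedDensity p μ) (hμ : MemLp id 2 μ)
    (hv : 0 < Var[id; μ]) : ∃ C, ∀ (n : ℕ) (x : ℝ), √(n + 1) * convPow p n x ≤ C := by
  obtain ⟨c, hc, hbound⟩ :=
    exists_norm_charFun_standardized_le hμ hv hp.tendsto_charFun_cocompact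
  have hsq := integrable_norm_charFun_standardized_sq hv hp.integrable_norm_charFun_sq
  obtain ⟨C, hC⟩ := exists_sqrt_mul_integral_norm_pow_le hc continuous_charFun hbound hsq
  obtain ⟨B, hB⟩ := hp.exists_le
  refine ⟨max B ((2 * π * √Var[id; μ])⁻¹ * C), fun n x => ?_⟩
  rcases n.eq_zero_or_pos with rfl | hn
  · simpa [convPow_zero] using .inl (hB x)
  refine le_max_of_le_right ?_
  obtain ⟨y, rfl⟩ : ∃ y, x = y + (n + 1) * ∫ y, y ∂μ := ⟨_, (sub_add_cancel x _).symm⟩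
  calc √(n + 1) * convPow p n (y + (n + 1) * ∫ y, y ∂μ)
      ≤ √(n + 1) * ‖(convPow p n (y + (n + 1) * ∫ y, y ∂μ) : ℂ)‖ := by
        gcongr
        rw [Complex.norm_real]
        exact le_norm_self _
    _ ≤ √(n + 1) * ((2 * π * √Var[id; μ])⁻¹ *
          ∫ s, ‖charFun (standardized μ) s‖ ^ (n + 1)) := by
        rw [hp.convPow_add_mul_mean_eq hv hn, norm_smul, norm_of_nonneg (by positivity)]
        gcongr
        refine (norm_integral_le_integral_norm _).trans_eq (integral_congr_ae (ae_of_all _ ?_))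
        intro s
        simp only [norm_mul, norm_pow, Complex.norm_exp_ofReal_mul_I, mul_one]
    _ = (2 * π * √Var[id; μ])⁻¹ *
          (√(n + 1 : ℕ) * ∫ s, ‖charFun (standardized μ) s‖ ^ (n + 1)) := by
        push_cast
        ring
    _ ≤ (2 * π * √Var[id; μ])⁻¹ * C := by
        gcongr
        exact hC (n + 1) (by omega)

lemma measurable_convPow (hp : IsBoundedDensity p μ) (n : ℕ) : Measurable (convPow p n) := by
  obtain ⟨B, hB⟩ := hp.exists_abs_le
  exact (continuous_convPow hp.integrable hp.continuous hB n).measurable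

lemma tendsto_sqrt_mul_integral_mul_convPow (hp : IsBoundedDensity p μ) (hμ : MemLp id 2 μ)
    (hv : 0 < Var[id; μ]) {r : ℝ → ℝ} (hr : Integrable r) (b : ℝ) :
    Tendsto (fun n : ℕ => √(n + 1) *
        ∫ y, r y * convPow p n (b - y + (n + 1) * ∫ y, y ∂μ)) atTop
      (𝓝 ((√(2 * π * Var[id; μ]))⁻¹ * ∫ y, r y)) := by
  obtain ⟨C, hC⟩ := hp.exists_sqrt_mul_convPow_le hμ hv
  have hlim := hp.tendsto_sqrt_mul_convPow hμ hv
  generalize ∫ y, y ∂μ = m at hlim ⊢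
  simp only [← integral_const_mul]
  refine tendsto_integral_of_dominated_convergence (fun y => C * |r y|) (fun n => ?_)
    (hr.abs.const_mul C) (fun n => ae_of_all _ fun y => ?_) (ae_of_all _ fun y => ?_)
  · have hmeas : Measurable fun y => convPow p n (b - y + (n + 1) * m) :=
      (hp.measurable_convPow n).comp (by fun_prop)
    exact (hr.aestronglyMeasurable.mul hmeas.aestronglyMeasurable).const_mul _
  · have hnonneg := convPow_nonneg hp.nonneg n (b - y + (n + 1) * m)
    rw [mul_left_comm, norm_mul, mul_comm, norm_of_nonneg (by positivity), norm_eq_abs]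
    gcongr
    exact hC n _
  · refine ((hlim (b - y)).mul_const (r y)).congr fun n => ?_
    ring

end IsBoundedDensity

end LocalLimit

section LegendreTransform

variable {Λ : ℝ → ℝ} {a b : ℝ}

lemma convexOn_add_deriv_mul_sub_le (hc : ConvexOn ℝ Set.univ Λ) (hd : DifferentiableAt ℝ Λ a)
    (b : ℝ) : Λ a + deriv Λ a * (b - a) ≤ Λ b := by
  rcases lt_trichotomy b a with hb | rfl | hb
  · have hslope := hc.slope_le_of_hasDerivAt (Set.mem_univ b) (Set.mem_univ a) hb hd.hasDerivAt
    rw [slope_def_field, div_le_iff₀ (sub_pos.2 hb)] at hslope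
    linarith
  · simp
  · have hslope := hc.le_slope_of_hasDerivAt (Set.mem_univ a) (Set.mem_univ b) hb hd.hasDerivAt
    rw [slope_def_field, le_div_iff₀ (sub_pos.2 hb)] at hslope
    linarith

lemma iSup_mul_deriv_sub_eq (hc : ConvexOn ℝ Set.univ Λ) (hd : DifferentiableAt ℝ Λ a) :
    ⨆ s, (s * deriv Λ a - Λ s) = a * deriv Λ a - Λ a := by
  have hle : ∀ s, s * deriv Λ a - Λ s ≤ a * deriv Λ a - Λ a := fun s => by
    linarith [convexOn_add_deriv_mul_sub_le hc hd s]
  exact (ciSup_le hle).antisymm (le_ciSup ⟨_, Set.forall_mem_range.2 hle⟩ a)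

lemma abs_iSup_mul_sub_le (hc : ConvexOn ℝ Set.univ Λ) (ha : DifferentiableAt ℝ Λ a)
    (hb : DifferentiableAt ℝ Λ b) :
    |(⨆ s, (s * deriv Λ b - Λ s)) - (⨆ s, (s * deriv Λ a - Λ s)) - (deriv Λ b - deriv Λ a) * a| ≤
      |(b - a) * (deriv Λ b - deriv Λ a)| := by
  have hab := convexOn_add_deriv_mul_sub_le hc ha b
  have hba := convexOn_add_deriv_mul_sub_le hc hb a
  rw [iSup_mul_deriv_sub_eq hc ha, iSup_mul_deriv_sub_eq hc hb, abs_of_nonneg (by linarith)]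
  exact le_trans (by linarith) (le_abs_self _)

lemma deriv_deriv_iSup_mul_sub (hd : Differentiable ℝ Λ) (hm : StrictMono (deriv Λ))
    (hs : Function.Surjective (deriv Λ)) (A : ℝ) :
    deriv Λ (deriv (fun A => ⨆ s, (s * A - Λ s)) A) = A := by
  have hc : ConvexOn ℝ Set.univ Λ := hm.monotone.convexOn_univ_of_deriv hd
  let e := hm.orderIsoOfSurjective (deriv Λ) hs
  have he : ∀ B, deriv Λ (e.symm B) = B := e.apply_symm_apply
  have hsymm : Tendsto (fun B => e.symm B - e.symm A) (nhds A) (nhds 0) := by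
    simpa using (e.symm.continuous.tendsto A).sub_const (e.symm A)
  suffices HasDerivAt (fun A => ⨆ s, (s * A - Λ s)) (e.symm A) A by rw [this.deriv, he]
  rw [hasDerivAt_iff_isLittleO]
  calc (fun B => (⨆ s, (s * B - Λ s)) - (⨆ s, (s * A - Λ s)) - (B - A) • e.symm A)
      =O[nhds A] fun B => (e.symm B - e.symm A) * (B - A) := by
        refine Asymptotics.IsBigO.of_bound' (Eventually.of_forall fun B => ?_)
        simpa only [he, smul_eq_mul, norm_eq_abs] using
          abs_iSup_mul_sub_le hc (hd (e.symm A)) (hd (e.symm B))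
    _ =o[nhds A] fun B => B - A := by
        simpa using ((Asymptotics.isLittleO_one_iff ℝ).2 hsymm).mul_isBigO
          (Asymptotics.isBigO_refl (fun B => B - A) (nhds A))

end LegendreTransform

section CumulantGeneratingFunction

open ProbabilityTheory

variable {Ω : Type*} [MeasurableSpace Ω] {X : Ω → ℝ} {μ : Measure Ω}

lemma variance_tilted_mul_pos {t : ℝ} (ht : t ∈ interior (integrableExpSet X μ))
    (hX : ∀ c, ¬ X =ᵐ[μ] fun _ => c) : 0 < Var[X; μ.tilted (t * X ·)] := by
  have hexp : Integrable (fun ω => exp (t * X ω)) μ :=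
    interior_subset (s := integrableExpSet X μ) ht
  have : NeZero μ := ⟨fun h => hX 0 (by simp [h, Filter.EventuallyEq])⟩
  have := isProbabilityMeasure_tilted hexp
  refine (variance_nonneg _ _).lt_of_ne fun hzero =>
    hX (∫ ω, X ω ∂μ.tilted (t * X ·)) ?_
  exact (absolutelyContinuous_tilted hexp).ae_le
    (ae_eq_integral_of_variance_eq_zero (memLp_tilted_mul ht 2) hzero.symm)

lemma differentiable_cgf (h : integrableExpSet X μ = Set.univ) : Differentiable ℝ (cgf X μ) :=
  fun t => (analyticAt_cgf (by simp [h])).differentiableAt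

lemma strictMono_deriv_cgf (h : integrableExpSet X μ = Set.univ)
    (hX : ∀ c, ¬ X =ᵐ[μ] fun _ => c) : StrictMono (deriv (cgf X μ)) := by
  refine strictMono_of_deriv_pos fun t => ?_
  have ht : t ∈ interior (integrableExpSet X μ) := by simp [h]
  have hpos := variance_tilted_mul_pos ht hX
  rwa [variance_tilted_mul ht, iteratedDeriv_succ, iteratedDeriv_one] at hpos

lemma add_log_measureReal_le_cgf_of_nonneg [IsFiniteMeasure μ] {a t : ℝ} (ht : 0 ≤ t)
    (hexp : Integrable (fun ω => exp (t * X ω)) μ) (ha : μ {ω | a ≤ X ω} ≠ 0) :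
    t * a + log (μ.real {ω | a ≤ X ω}) ≤ cgf X μ t := by
  have hpos := measureReal_nonneg.lt_of_ne' ((measureReal_ne_zero_iff).2 ha)
  have hlog := log_le_log hpos (measure_ge_le_exp_cgf a ht hexp)
  rw [log_exp] at hlog
  linarith

lemma add_log_measureReal_le_cgf_of_nonpos [IsFiniteMeasure μ] {a t : ℝ} (ht : t ≤ 0)
    (hexp : Integrable (fun ω => exp (t * X ω)) μ) (ha : μ {ω | X ω ≤ a} ≠ 0) :
    t * a + log (μ.real {ω | X ω ≤ a}) ≤ cgf X μ t := by
  have hpos := measureReal_nonneg.lt_of_ne' ((measureReal_ne_zero_iff).2 ha)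
  have hlog := log_le_log hpos (measure_le_le_exp_cgf a ht hexp)
  rw [log_exp] at hlog
  linarith

lemma surjective_deriv_cgf (h : integrableExpSet X μ = Set.univ)
    (hge : ∀ a, μ {ω | a ≤ X ω} ≠ 0) (hle : ∀ a, μ {ω | X ω ≤ a} ≠ 0) :
    Function.Surjective (deriv (cgf X μ)) := by
  intro B
  have hexp : ∀ t, Integrable (fun ω => exp (t * X ω)) μ := Set.eq_univ_iff_forall.1 h
  have : IsFiniteMeasure μ := by
    simpa [integrable_const_iff] using hexp 0
  have hd := differentiable_cgf h
  have htop : Tendsto (fun t => cgf X μ t - t * B) atTop atTop := by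
    refine tendsto_atTop_mono' _ ?_ (tendsto_atTop_add_const_right _
      (log (μ.real {ω | B + 1 ≤ X ω})) tendsto_id)
    filter_upwards [eventually_ge_atTop 0] with t ht
    have := add_log_measureReal_le_cgf_of_nonneg ht (hexp t) (hge (B + 1))
    simp only [id]
    linarith
  have hbot : Tendsto (fun t => cgf X μ t - t * B) atBot atTop := by
    refine tendsto_atTop_mono' _ ?_ (tendsto_atTop_add_const_right _
      (log (μ.real {ω | X ω ≤ B - 1})) tendsto_neg_atBot_atTop)
    filter_upwards [eventually_le_atBot 0] with t ht
    have := add_log_measureReal_le_cgf_of_nonpos ht (hexp t) (hle (B - 1))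
    linarith
  obtain ⟨s, hs⟩ := (hd.continuous.sub (continuous_mul_const B)).exists_forall_le
    (by simpa [cocompact_eq_atBot_atTop] using ⟨hbot, htop⟩)
  have hmin : IsLocalMin (fun t => cgf X μ t - t * B) s := Eventually.of_forall hs
  have hderiv := ((hd s).hasDerivAt.sub (hasDerivAt_mul_const B)).deriv
  exact ⟨s, sub_eq_zero.1 (hderiv.symm.trans hmin.deriv_eq_zero)⟩

end CumulantGeneratingFunction

section BoltzmannMeasure

open ProbabilityTheory

/-- A potential is superlinear if it grows faster than every linear function, that is, if its
Fenchel conjugate is finite everywhere. -/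
def IsSuperlinear (ψ : ℝ → ℝ) : Prop :=
  ∀ σ : ℝ, BddBelow (Set.range fun y => ψ y - σ * y)

/-- The Boltzmann measure `exp (-ψ y) dy` of the potential `ψ` at inverse temperature `1`. It is
not normalised. -/
def boltzmann (ψ : ℝ → ℝ) : Measure ℝ :=
  volume.withDensity fun y => ENNReal.ofReal (exp (-ψ y))

variable {ψ : ℝ → ℝ}

namespace IsSuperlinear

lemma exists_exp_le (hψ : IsSuperlinear ψ) (σ : ℝ) : ∃ C, ∀ y, exp (-ψ y + σ * y) ≤ C := by
  obtain ⟨a, ha⟩ := hψ σ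
  exact ⟨exp (-a), fun y => exp_le_exp.2 (by linarith [ha ⟨y, rfl⟩])⟩

lemma integrable_exp (hψ : IsSuperlinear ψ) (hm : Measurable ψ) (σ : ℝ) :
    Integrable fun y => exp (-ψ y + σ * y) := by
  obtain ⟨a, ha⟩ := hψ.exists_exp_le (σ - 1)
  obtain ⟨b, hb⟩ := hψ.exists_exp_le (σ + 1)
  rw [← integrableOn_univ, ← Set.Iic_union_Ioi (a := 0), integrableOn_union]
  constructor
  · refine ((integrableOn_exp_Iic 0).const_mul a).mono' (by fun_prop) (ae_of_all _ fun y => ?_)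
    calc ‖exp (-ψ y + σ * y)‖ = exp (-ψ y + (σ - 1) * y) * exp y := by
          rw [norm_eq_abs, abs_exp, ← exp_add]
          ring_nf
      _ ≤ a * exp y := by gcongr; exact ha y
  · refine ((integrableOn_exp_neg_Ioi 0).const_mul b).mono' (by fun_prop)
      (ae_of_all _ fun y => ?_)
    calc ‖exp (-ψ y + σ * y)‖ = exp (-ψ y + (σ + 1) * y) * exp (-y) := by
          rw [norm_eq_abs, abs_exp, ← exp_add]
          ring_nf
      _ ≤ b * exp (-y) := by gcongr; exact hb y

lemma integrable_exp_sub_mul_sub (hψ : IsSuperlinear ψ) (hm : Measurable ψ) (σ A : ℝ) :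
    Integrable fun y => exp (-ψ y - σ * (A - y)) := by
  refine ((hψ.integrable_exp hm σ).mul_const (exp (-(σ * A)))).congr (ae_of_all _ fun y => ?_)
  simp only [← exp_add]
  ring_nf

end IsSuperlinear

lemma integrable_boltzmann_iff (hm : Measurable ψ) {f : ℝ → ℝ} :
    Integrable f (boltzmann ψ) ↔ Integrable fun y => exp (-ψ y) * f y := by
  rw [boltzmann, integrable_withDensity_iff_integrable_smul₀' (by fun_prop)
    (ae_of_all _ fun _ => ENNReal.ofReal_lt_top)]
  simp only [ENNReal.toReal_ofReal (exp_pos _).le, smul_eq_mul]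

lemma integral_boltzmann (hm : Measurable ψ) (f : ℝ → ℝ) :
    ∫ y, f y ∂boltzmann ψ = ∫ y, exp (-ψ y) * f y := by
  rw [boltzmann, integral_withDensity_eq_integral_toReal_smul (by fun_prop)
    (ae_of_all _ fun _ => ENNReal.ofReal_lt_top)]
  simp only [ENNReal.toReal_ofReal (exp_pos _).le, smul_eq_mul]

lemma mgf_id_boltzmann (hm : Measurable ψ) (σ : ℝ) :
    mgf id (boltzmann ψ) σ = ∫ y, exp (-ψ y + σ * y) := by
  simp only [mgf, integral_boltzmann hm, id, exp_add]

lemma W_eq_iSup_mul_sub_cgf (hm : Measurable ψ) :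
    W ψ = fun A => ⨆ σ, (σ * A - cgf id (boltzmann ψ) σ) := by
  ext A
  simp only [W, cgf, mgf_id_boltzmann hm]

lemma integrableExpSet_id_boltzmann (hψ : IsSuperlinear ψ) (hm : Measurable ψ) :
    integrableExpSet id (boltzmann ψ) = Set.univ := by
  refine Set.eq_univ_of_forall fun σ => (integrable_boltzmann_iff hm).2 ?_
  simpa only [id, exp_add] using hψ.integrable_exp hm σ

lemma volume_absolutelyContinuous_boltzmann (hm : Measurable ψ) : volume ≪ boltzmann ψ :=
  withDensity_absolutelyContinuous' (by fun_prop) (ae_of_all _ fun y => by simp [exp_pos])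

lemma boltzmann_Ici_ne_zero (hm : Measurable ψ) (a : ℝ) : boltzmann ψ {y | a ≤ id y} ≠ 0 := by
  refine fun h => ENNReal.top_ne_zero ?_
  rw [← Real.volume_Ici (a := a)]
  exact volume_absolutelyContinuous_boltzmann hm h

lemma boltzmann_Iic_ne_zero (hm : Measurable ψ) (a : ℝ) : boltzmann ψ {y | id y ≤ a} ≠ 0 := by
  refine fun h => ENNReal.top_ne_zero ?_
  rw [← Real.volume_Iic (a := a)]
  exact volume_absolutelyContinuous_boltzmann hm h

lemma not_id_ae_eq_const_boltzmann (hm : Measurable ψ) (c : ℝ) :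
    ¬ id =ᵐ[boltzmann ψ] fun _ => c := fun h => by
  have hc : ∀ᵐ y : ℝ, y = c := (volume_absolutelyContinuous_boltzmann hm).ae_le h
  have hne : ∀ᵐ y : ℝ, y ≠ c := Measure.ae_ne volume c
  obtain ⟨y, hy, hy'⟩ := (hc.and hne).exists
  exact hy' hy

lemma deriv_cgf_boltzmann_deriv_W (hψ : IsSuperlinear ψ) (hm : Measurable ψ) (A : ℝ) :
    deriv (cgf id (boltzmann ψ)) (deriv (W ψ) A) = A := by
  have hexp := integrableExpSet_id_boltzmann hψ hm
  rw [W_eq_iSup_mul_sub_cgf hm]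
  exact deriv_deriv_iSup_mul_sub (differentiable_cgf hexp)
    (strictMono_deriv_cgf hexp (not_id_ae_eq_const_boltzmann hm))
    (surjective_deriv_cgf hexp (boltzmann_Ici_ne_zero hm) (boltzmann_Iic_ne_zero hm)) A

/-- The Boltzmann measure of `ψ` tilted by the stress `σ`: the law of a single bond under `σ`, which
is a probability measure for superlinear `ψ`. -/
def tiltedBoltzmann (ψ : ℝ → ℝ) (σ : ℝ) : Measure ℝ :=
  (boltzmann ψ).tilted (σ * id ·)

lemma isProbabilityMeasure_tiltedBoltzmann (hψ : IsSuperlinear ψ) (hm : Measurable ψ) (σ : ℝ) :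
    IsProbabilityMeasure (tiltedBoltzmann ψ σ) := by
  have : NeZero (boltzmann ψ) := ⟨fun h => boltzmann_Ici_ne_zero hm 0 (by simp [h])⟩
  exact isProbabilityMeasure_tilted
    (Set.eq_univ_iff_forall.1 (integrableExpSet_id_boltzmann hψ hm) σ)

lemma memLp_two_tiltedBoltzmann (hψ : IsSuperlinear ψ) (hm : Measurable ψ) (σ : ℝ) :
    MemLp id 2 (tiltedBoltzmann ψ σ) :=
  memLp_tilted_mul (by simp [integrableExpSet_id_boltzmann hψ hm]) 2

lemma variance_tiltedBoltzmann_pos (hψ : IsSuperlinear ψ) (hm : Measurable ψ) (σ : ℝ) :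
    0 < Var[id; tiltedBoltzmann ψ σ] :=
  variance_tilted_mul_pos (by simp [integrableExpSet_id_boltzmann hψ hm])
    (not_id_ae_eq_const_boltzmann hm)

lemma integral_tiltedBoltzmann_deriv_W (hψ : IsSuperlinear ψ) (hm : Measurable ψ) (A : ℝ) :
    ∫ y, y ∂tiltedBoltzmann ψ (deriv (W ψ) A) = A :=
  (integral_tilted_mul_self (by simp [integrableExpSet_id_boltzmann hψ hm])).trans
    (deriv_cgf_boltzmann_deriv_W hψ hm A)

lemma isBoundedDensity_tiltedBoltzmann (hψ : IsSuperlinear ψ) (hc : Continuous ψ) (σ : ℝ) :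
    IsBoundedDensity (fun y => exp (-ψ y + σ * y) / ∫ y, exp (-ψ y + σ * y))
      (tiltedBoltzmann ψ σ) where
  continuous := by fun_prop
  nonneg y := by positivity
  exists_le := by
    obtain ⟨C, hC⟩ := hψ.exists_exp_le σ
    exact ⟨C / ∫ y, exp (-ψ y + σ * y), fun y => by gcongr; exact hC y⟩
  eq_withDensity := by
    have hm := hc.measurable
    have hmgf : ∫ y, exp (σ * id y) ∂boltzmann ψ = ∫ y, exp (-ψ y + σ * y) :=
      mgf_id_boltzmann hm σ
    rw [tiltedBoltzmann, Measure.tilted, hmgf, boltzmann,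
      ← withDensity_mul _ (by fun_prop) (by fun_prop)]
    congr 1 with y
    rw [Pi.mul_apply, ← ENNReal.ofReal_mul (exp_pos _).le, ← mul_div_assoc, exp_add, id]

end BoltzmannMeasure

section StrongConvexity

variable {φ : ℝ → ℝ} {m : ℝ}

lemma hasDerivAt_sub_half_mul_sq {φ' y : ℝ} (h : HasDerivAt φ φ' y) (m : ℝ) :
    HasDerivAt (fun y => φ y - m / 2 * y ^ 2) (φ' - m * y) y := by
  refine (h.fun_sub ((hasDerivAt_pow 2 y).const_mul (m / 2))).congr_deriv ?_
  push_cast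
  ring

lemma strongConvexOn_univ_of_le_deriv2_s11 (hφ : ContDiff ℝ 2 φ) (hm : ∀ y, m ≤ deriv (deriv φ) y) :
    StrongConvexOn Set.univ m φ := by
  have hd : Differentiable ℝ φ := hφ.differentiable two_ne_zero
  have hd' : Differentiable ℝ (deriv φ) := hφ.differentiable_deriv_two
  have hderiv : deriv (fun y => φ y - m / 2 * y ^ 2) = fun y => deriv φ y - m * y :=
    funext fun y => (hasDerivAt_sub_half_mul_sq (hd y).hasDerivAt m).deriv
  have hderiv' (y : ℝ) : deriv (fun y => deriv φ y - m * y) y = deriv (deriv φ) y - m := by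
    rw [deriv_fun_sub (hd' y) (by fun_prop), deriv_const_mul_field, deriv_id'', mul_one]
  rw [strongConvexOn_iff_convex]
  simp only [norm_eq_abs, sq_abs]
  refine convexOn_univ_of_deriv2_nonneg (by fun_prop) (by rw [hderiv]; fun_prop) fun y => ?_
  rw [Function.iterate_succ, Function.iterate_one, Function.comp_apply, hderiv, hderiv']
  exact sub_nonneg.2 (hm y)

lemma isSuperlinear_of_strongConvexOn (hm : 0 < m) (hφ : StrongConvexOn Set.univ m φ)
    (hd : DifferentiableAt ℝ φ 0) : IsSuperlinear φ := by
  intro σ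
  rw [strongConvexOn_iff_convex] at hφ
  simp only [norm_eq_abs, sq_abs] at hφ
  have hderiv := hasDerivAt_sub_half_mul_sq hd.hasDerivAt m
  refine ⟨φ 0 - (deriv φ 0 - σ) ^ 2 / (2 * m), Set.forall_mem_range.2 fun y => ?_⟩
  have htangent := convexOn_add_deriv_mul_sub_le hφ hderiv.differentiableAt y
  rw [hderiv.deriv] at htangent
  have hsq : (deriv φ 0 - σ) * y + m / 2 * y ^ 2 + (deriv φ 0 - σ) ^ 2 / (2 * m) =
      m / 2 * (y + (deriv φ 0 - σ) / m) ^ 2 := by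
    field_simp
    ring
  have hnonneg : 0 ≤ m / 2 * (y + (deriv φ 0 - σ) / m) ^ 2 := by positivity
  linarith

lemma isSuperlinear_of_le_deriv2 (hm : 0 < m) (hφ : ContDiff ℝ 2 φ)
    (hφ'' : ∀ y, m ≤ deriv (deriv φ) y) : IsSuperlinear φ :=
  isSuperlinear_of_strongConvexOn hm (strongConvexOn_univ_of_le_deriv2_s11 hφ hφ'')
    (hφ.differentiable two_ne_zero 0)

end StrongConvexity

section ChainPartitionFunction

/-- The partition function of a chain of `n + 1` bonds with bond potentials `φ 1, …, φ (n + 1)` and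
defect potential `d`, whose ends are held at `0` and `b`. It has values in `ℝ≥0∞`, so that the
particles can be integrated out without integrability conditions. -/
def chainPartition (φ : ℕ → ℝ → ℝ) (d : ℝ → ℝ) (n : ℕ) (b : ℝ) : ENNReal :=
  ∫⁻ u : Fin n → ℝ,
    ENNReal.ofReal (exp (-(chainE φ (n + 1) b u) - d (bc (n + 1) b u 1)))

variable {φ : ℕ → ℝ → ℝ} {d : ℝ → ℝ} {n : ℕ}

lemma bc_last (b : ℝ) (u : Fin n → ℝ) : bc (n + 1) b u (n + 1) = b := by
  simp [bc]

lemma bc_init (b : ℝ) (u : Fin (n + 1) → ℝ) {i : ℕ} (hi : i ≤ n + 1) :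
    bc (n + 2) b u i = bc (n + 1) (u (Fin.last n)) (Fin.init u) i := by
  rcases i.eq_zero_or_pos with rfl | hpos
  · simp [bc]
  rcases hi.eq_or_lt with rfl | hlt
  · simp [bc, Fin.last]
  · simp [bc, hpos, hlt, hlt.trans, Fin.init]

lemma chainE_init (φ : ℕ → ℝ → ℝ) (b : ℝ) (u : Fin (n + 1) → ℝ) :
    chainE φ (n + 2) b u =
      chainE φ (n + 1) (u (Fin.last n)) (Fin.init u) + φ (n + 2) (b - u (Fin.last n)) := by
  rw [chainE, Finset.sum_range_succ, bc_last, bc_init b u le_rfl, bc_last, chainE]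
  congr 1
  refine Finset.sum_congr rfl fun i hi => ?_
  rw [Finset.mem_range] at hi
  rw [bc_init b u hi, bc_init b u hi.le]

lemma measurable_bc (i : ℕ) :
    Measurable fun z : ℝ × (Fin n → ℝ) => bc (n + 1) z.1 z.2 i := by
  unfold bc
  split_ifs <;> fun_prop

lemma measurable_chainE (hφ : ∀ i, Measurable (φ i)) :
    Measurable fun z : ℝ × (Fin n → ℝ) => chainE φ (n + 1) z.1 z.2 := by
  unfold chainE
  exact Finset.measurable_fun_sum _ fun i _ =>
    (hφ _).comp ((measurable_bc (i + 1)).sub (measurable_bc i))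

lemma measurable_chain_weight (hφ : ∀ i, Measurable (φ i)) (hd : Measurable d) :
    Measurable fun z : ℝ × (Fin n → ℝ) =>
      exp (-(chainE φ (n + 1) z.1 z.2) - d (bc (n + 1) z.1 z.2 1)) :=
  ((measurable_chainE hφ).neg.sub (hd.comp (measurable_bc 1))).exp

lemma lintegral_fin_succ_init {α : Type*} [MeasureSpace α] [SigmaFinite (volume : Measure α)]
    {f : α × (Fin n → α) → ENNReal} (hf : Measurable f) :
    ∫⁻ u : Fin (n + 1) → α, f (u (Fin.last n), Fin.init u) = ∫⁻ v, ∫⁻ u, f (v, u) := by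
  rw [← lintegral_prod _ hf.aemeasurable]
  refine Eq.trans ?_ ((volume_preserving_piFinSuccAbove (fun _ : Fin (n + 1) => α)
    (Fin.last n)).lintegral_comp hf)
  refine lintegral_congr fun u => ?_
  simp [MeasurableEquiv.piFinSuccAbove_apply, Fin.insertNthEquiv, Fin.removeNth_last]

lemma chainPartition_zero (φ : ℕ → ℝ → ℝ) (d : ℝ → ℝ) :
    chainPartition φ d 0 = fun b => ENNReal.ofReal (exp (-φ 1 b - d b)) := by
  ext b
  simp [chainPartition, chainE, bc, volume_pi]

lemma chainPartition_succ (hφ : ∀ i, Measurable (φ i)) (hd : Measurable d) (n : ℕ) :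
    chainPartition φ d (n + 1) =
      chainPartition φ d n ⋆ₗ fun x => ENNReal.ofReal (exp (-φ (n + 2) x)) := by
  ext b
  have hw := (measurable_chain_weight (n := n) hφ hd).ennreal_ofReal
  have hlast : Measurable fun z : ℝ × (Fin n → ℝ) =>
      ENNReal.ofReal (exp (-φ (n + 2) (-z.1 + b))) := by
    have := hφ (n + 2)
    fun_prop
  rw [lconvolution_def]
  calc chainPartition φ d (n + 1) b
      = ∫⁻ u : Fin (n + 1) → ℝ,
          ENNReal.ofReal (exp (-(chainE φ (n + 1) (u (Fin.last n)) (Fin.init u)) -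
            d (bc (n + 1) (u (Fin.last n)) (Fin.init u) 1))) *
          ENNReal.ofReal (exp (-φ (n + 2) (-u (Fin.last n) + b))) := by
        refine lintegral_congr fun u => ?_
        rw [chainE_init, bc_init b u (by omega), ← ENNReal.ofReal_mul (exp_pos _).le, ← exp_add]
        ring_nf
    _ = ∫⁻ v, chainPartition φ d n v * ENNReal.ofReal (exp (-φ (n + 2) (-v + b))) := by
        refine (lintegral_fin_succ_init (hw.mul hlast)).trans (lintegral_congr fun v => ?_)
        exact lintegral_mul_const (ENNReal.ofReal (exp (-φ (n + 2) (-v + b))))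
          (hw.comp (measurable_prodMk_left (x := v)))

lemma chainPartition_const_succ {ψ : ℝ → ℝ} (hψ : Continuous ψ) (hd : Measurable d)
    (hint : Integrable fun y => exp (-ψ y)) {B : ℝ} (hB : ∀ y, exp (-ψ y) ≤ B) (n : ℕ) :
    chainPartition (fun _ => ψ) d (n + 1) = (fun y => ENNReal.ofReal (exp (-ψ y - d y))) ⋆ₗ
      fun y => ENNReal.ofReal (convPow (fun y => exp (-ψ y)) n y) := by
  have hm := hψ.measurable
  have hB' : ∀ y, |exp (-ψ y)| ≤ B := by simpa only [abs_exp] using hB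
  induction n with
  | zero => rw [chainPartition_succ (fun _ => hm) hd, chainPartition_zero, convPow_zero]
  | succ n ih =>
    have hconv := (continuous_convPow hint (by fun_prop) hB' n).measurable
    rw [chainPartition_succ (fun _ => hm) hd, ih,
      ← lconvolution_assoc (by fun_prop) (by fun_prop) (by fun_prop),
      ofReal_convPow_succ hint (by fun_prop) (fun _ => (exp_pos _).le) hB',
      lconvolution_comm (f := fun y => ENNReal.ofReal (exp (-ψ y)))]

lemma integral_chain_weight_eq {ψ : ℝ → ℝ} (hψ : Continuous ψ) (hd : Measurable d)
    (hint : Integrable fun y => exp (-ψ y)) {B : ℝ} (hB : ∀ y, exp (-ψ y) ≤ B) (n : ℕ) (b : ℝ) :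
    ∫ u : Fin (n + 1) → ℝ, exp (-(chainE (fun _ => ψ) (n + 2) b u) - d (bc (n + 2) b u 1)) =
      ∫ y, exp (-ψ y - d y) * convPow (fun y => exp (-ψ y)) n (b - y) := by
  have hm := hψ.measurable
  have hB' : ∀ y, |exp (-ψ y)| ≤ B := by simpa only [abs_exp] using hB
  have hconv := (continuous_convPow hint (by fun_prop) hB' n).measurable
  have hconv₀ : ∀ x, 0 ≤ convPow (fun y => exp (-ψ y)) n x :=
    convPow_nonneg (fun _ => (exp_pos _).le) n
  have hweight := (measurable_chain_weight (fun _ => hm) hd).comp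
    (measurable_prodMk_left (x := b) (β := Fin (n + 1) → ℝ))
  rw [integral_eq_lintegral_of_nonneg_ae (ae_of_all _ fun y => mul_nonneg (exp_pos _).le (hconv₀ _))
    (by fun_prop)]
  refine (integral_eq_lintegral_of_nonneg_ae (ae_of_all _ fun _ => (exp_pos _).le)
    hweight.aestronglyMeasurable).trans (congrArg ENNReal.toReal ?_)
  refine (congrFun (chainPartition_const_succ hψ hd hint hB n) b).trans ?_
  simp only [lconvolution_def, ENNReal.ofReal_mul (exp_pos _).le, sub_eq_neg_add b]

end ChainPartitionFunction

section ThermodynamicLimit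

open ProbabilityTheory
open scoped Topology

lemma convPow_const_mul_exp_mul (c s : ℝ) (f : ℝ → ℝ) (n : ℕ) (x : ℝ) :
    convPow (fun y => c * exp (s * y) * f y) n x = c ^ (n + 1) * exp (s * x) * convPow f n x := by
  induction n generalizing x with
  | zero => simp [convPow_zero]
  | succ n ih =>
    rw [convPow_succ_apply, convPow_succ_apply, ← integral_const_mul]
    refine integral_congr_ae (ae_of_all _ fun y => ?_)
    have hexp : exp (s * x) = exp (s * y) * exp (s * (x - y)) := by
      rw [← exp_add]
      ring_nf
    simp only [ih, hexp]
    ring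

variable {ψ : ℝ → ℝ}

lemma convPow_exp_neg_eq (hψ : IsSuperlinear ψ) (hm : Measurable ψ) (σ : ℝ) (n : ℕ) (x : ℝ) :
    convPow (fun y => exp (-ψ y)) n x = (∫ y, exp (-ψ y + σ * y)) ^ (n + 1) * exp (-(σ * x)) *
      convPow (fun y => exp (-ψ y + σ * y) / ∫ y, exp (-ψ y + σ * y)) n x := by
  have hZ := integral_exp_pos (hψ.integrable_exp hm σ)
  rw [← neg_mul, ← convPow_const_mul_exp_mul]
  congr 1 with y
  rw [← mul_div_assoc, mul_assoc, mul_div_cancel_left₀ _ hZ.ne', ← exp_add]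
  ring_nf

lemma integral_chain_weight_eq_tilted (hψ : IsSuperlinear ψ) (hc : Continuous ψ) {d : ℝ → ℝ}
    (hd : Measurable d) (σ A : ℝ) (n : ℕ) :
    ∫ u : Fin (n + 1) → ℝ, exp (-(chainE (fun _ => ψ) (n + 2) ((n + 2 : ℕ) * A) u) -
        d (bc (n + 2) ((n + 2 : ℕ) * A) u 1)) =
      ((∫ y, exp (-ψ y + σ * y)) ^ (n + 1) * exp (-(σ * ((n + 1) * A)))) *
        ∫ y, exp (-d y - ψ y - σ * (A - y)) *
          convPow (fun y => exp (-ψ y + σ * y) / ∫ y, exp (-ψ y + σ * y)) n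
            (A - y + (n + 1) * A) := by
  obtain ⟨B, hB⟩ := hψ.exists_exp_le 0
  have hint := hψ.integrable_exp hc.measurable 0
  simp only [zero_mul, add_zero] at hB hint
  rw [integral_chain_weight_eq hc hd hint hB, ← integral_const_mul]
  refine integral_congr_ae (ae_of_all _ fun y => ?_)
  have hpos : ((n + 2 : ℕ) * A - y : ℝ) = A - y + (n + 1) * A := by
    push_cast
    ring
  have hexp : exp (-ψ y - d y) * exp (-(σ * (A - y + (n + 1) * A))) =
      exp (-(σ * ((n + 1) * A))) * exp (-d y - ψ y - σ * (A - y)) := by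
    rw [← exp_add, ← exp_add]
    ring_nf
  simp only [hpos, convPow_exp_neg_eq hψ hc.measurable σ]
  linear_combination (∫ y, exp (-ψ y + σ * y)) ^ (n + 1) *
    convPow (fun y => exp (-ψ y + σ * y) / ∫ y, exp (-ψ y + σ * y)) n (A - y + (n + 1) * A) * hexp

lemma exists_tendsto_mul_integral_chain_weight (hψ : IsSuperlinear ψ) (hc : Continuous ψ) (A : ℝ) :
    ∃ c : ℕ → ℝ, ∀ d : ℝ → ℝ, Measurable d →
      Integrable (fun y => exp (-d y - ψ y - deriv (W ψ) A * (A - y))) →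
      Tendsto (fun n : ℕ => c n * ∫ u : Fin (n + 1) → ℝ,
          exp (-(chainE (fun _ => ψ) (n + 2) ((n + 2 : ℕ) * A) u) -
            d (bc (n + 2) ((n + 2 : ℕ) * A) u 1))) atTop
        (𝓝 (∫ y, exp (-d y - ψ y - deriv (W ψ) A * (A - y)))) := by
  have hm := hc.measurable
  set σ := deriv (W ψ) A
  have := isProbabilityMeasure_tiltedBoltzmann hψ hm σ
  have hZ := integral_exp_pos (hψ.integrable_exp hm σ)
  have hv := variance_tiltedBoltzmann_pos hψ hm σ
  set v := Var[id; tiltedBoltzmann ψ σ]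
  refine ⟨fun n => √(2 * π * v) * √(n + 1) *
    ((∫ y, exp (-ψ y + σ * y)) ^ (n + 1) * exp (-(σ * ((n + 1) * A))))⁻¹, fun d hd hr => ?_⟩
  have hlim := (isBoundedDensity_tiltedBoltzmann hψ hc σ).tendsto_sqrt_mul_integral_mul_convPow
    (memLp_two_tiltedBoltzmann hψ hm σ) hv hr A
  rw [integral_tiltedBoltzmann_deriv_W hψ hm A] at hlim
  have hlim' := hlim.const_mul √(2 * π * v)
  rw [mul_inv_cancel_left₀ (by positivity)] at hlim'
  refine hlim'.congr fun n => ?_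
  rw [integral_chain_weight_eq_tilted hψ hc hd σ, mul_assoc _ _⁻¹,
    inv_mul_cancel_left₀ (by positivity), mul_assoc √(2 * π * v)]

lemma tendsto_log_sub_log_of_tendsto_mul {ι : Type*} {l : Filter ι} {c x y : ι → ℝ} {a b : ℝ}
    (ha : a ≠ 0) (hb : b ≠ 0) (hx : Tendsto (fun i => c i * x i) l (𝓝 a))
    (hy : Tendsto (fun i => c i * y i) l (𝓝 b)) :
    Tendsto (fun i => log (x i) - log (y i)) l (𝓝 (log (a / b))) := by
  refine ((hx.div hy hb).log (div_ne_zero ha hb)).congr' ?_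
  filter_upwards [hx.eventually_ne ha, hy.eventually_ne hb] with i hxi hyi
  rw [Pi.div_apply, mul_div_mul_left _ _ (left_ne_zero_of_mul hxi),
    log_div (right_ne_zero_of_mul hxi) (right_ne_zero_of_mul hyi)]

theorem thermodynamic_limit_coarse_grained_representation_general {ψ P : ℝ → ℝ}
    (hψ : IsSuperlinear ψ) (hc : Continuous ψ) (hP : Measurable P) {A : ℝ}
    (hint : Integrable fun y => exp (-P y - ψ y - deriv (W ψ) A * (A - y))) :
    Tendsto
      (fun N : ℕ => freeEnergy (fun _ => ψ) P N A - freeEnergy (fun _ => ψ) (fun _ => 0) N A)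
      atTop
      (𝓝 (-log ((∫ y, exp (-P y - ψ y - deriv (W ψ) A * (A - y))) /
        (∫ y, exp (-ψ y - deriv (W ψ) A * (A - y)))))) := by
  have hint₀ : Integrable fun y => exp (-0 - ψ y - deriv (W ψ) A * (A - y)) := by
    simpa only [neg_zero, zero_sub] using hψ.integrable_exp_sub_mul_sub hc.measurable _ A
  obtain ⟨c, hlim⟩ := exists_tendsto_mul_integral_chain_weight hψ hc A
  have hlog := tendsto_log_sub_log_of_tendsto_mul (integral_exp_pos hint).ne'
    (integral_exp_pos hint₀).ne' (hlim P hP hint) (hlim (fun _ => 0) measurable_const hint₀)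
  simp only [neg_zero, zero_sub] at hlog
  refine (tendsto_add_atTop_iff_nat 2).1 (hlog.neg.congr fun n => ?_)
  simp only [freeEnergy, Nat.add_succ_sub_one]
  ring

end ThermodynamicLimit

/-- representation of the thermodynamic limit `G_∞(A)` in terms of the
coarse-grained energy `E^cg(A,y) = W'(A)(A-y)`. -/
theorem thermodynamic_limit_coarse_grained_representation
    (ψ P : ℝ → ℝ) (κ₁ κ₂ ς₁ ς₂ : ℝ)
    (hψ : ContDiff ℝ 2 ψ) (hP : ContDiff ℝ 2 P)
    (hκ₁ : 0 < κ₁) (hκ : κ₁ ≤ κ₂) (hς₁ : 0 < ς₁) (hς : ς₁ ≤ ς₂)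
    (hψ'' : ∀ y : ℝ, κ₁ ≤ deriv (deriv ψ) y ∧ deriv (deriv ψ) y ≤ κ₂)
    (hψP'' : ∀ y : ℝ, ς₁ ≤ deriv (deriv (fun z => ψ z + P z)) y ∧
        deriv (deriv (fun z => ψ z + P z)) y ≤ ς₂)
    (A : ℝ) :
    Tendsto
      (fun N : ℕ => freeEnergy (fun _ => ψ) P N A - freeEnergy (fun _ => ψ) (fun _ => 0) N A)
      atTop
      (nhds (- Real.log
        ((∫ y : ℝ, Real.exp (-P y - ψ y - deriv (W ψ) A * (A - y))) /
         (∫ y : ℝ, Real.exp (-ψ y - deriv (W ψ) A * (A - y)))))) := by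
  have hgrowth := isSuperlinear_of_le_deriv2 hκ₁ hψ fun y => (hψ'' y).1
  have hgrowthP := isSuperlinear_of_le_deriv2 hς₁ (hψ.add hP) fun y => (hψP'' y).1
  have hint := hgrowthP.integrable_exp_sub_mul_sub
    (hψ.continuous.add hP.continuous).measurable (deriv (W ψ) A) A
  simp only [neg_add_rev, ← sub_eq_add_neg] at hint
  exact thermodynamic_limit_coarse_grained_representation_general hgrowth hψ.continuous
    hP.continuous.measurable hint
end
end

section
/- There exists a constant C > 0 such that for every integer N ≥ 2, any solution σ_N of the equation A = (1/N)·( Ψ_P(σ_N − h₁) + ∑_{i=2}^N Ψ(σ_N − h_i) ) satisfies |σ_N − σ₀| ≤ C/N, where σ₀ is the unique solution of A = Ψ(σ₀). -/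
/-!
`Psi f σ` is the mean of the probability density proportional to `exp (-f y + σ y)`. If `f - g` is
monotone, then the density of `g` has a monotone ratio to that of `f`, so its mean is larger.
Subtracting `t y` from `f` shifts `σ` by `t`, and translating `f` by `s` shifts the mean by `s`.
When `f y - a y² / 2` is convex and `f y - b y² / 2` is concave (that is, `a ≤ f'' ≤ b` for smooth
`f`), the function `f y - t y - f (y - s)` is increasing for `s = t / a` and decreasing for
`s = t / b`, whence `t / b ≤ Psi f (σ + t) - Psi f σ ≤ t / a` for `t ≥ 0`, without differentiating
under the integral.

Write `Ψ = Psi ψ` and `Ψ_P = Psi (ψ + P)`. With `S σ = Ψ_P (σ - h₁) + ∑_{i=2}^N Ψ (σ - h_i)`, it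
follows that `(N - 1) |σ_N - σ₀| / κ₂ ≤ |S σ_N - S σ₀|`, since `Ψ_P` is increasing. Here
`S σ_N = N A = N Ψ(σ₀)`, and this differs from `S σ₀` by at most
`|Ψ(σ₀) - Ψ_P (σ₀ - h₁)| + ∑ |h_i| / κ₁`.
-/

noncomputable section

open MeasureTheory Real

/-- `Ψ(σ) = (∫ y exp(-f(y)+σy) dy) / (∫ exp(-f(y)+σy) dy)`. -/
def Psi (f : ℝ → ℝ) (σ : ℝ) : ℝ :=
  (∫ y : ℝ, y * Real.exp (-f y + σ * y)) / (∫ y : ℝ, Real.exp (-f y + σ * y))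

section Monotone

variable {g : ℝ → ℝ} {c L : ℝ}

lemma mul_abs_sub_le_of_monotone_sub_mul (hg : Monotone fun x => g x - c * x) (x y : ℝ) :
    c * |x - y| ≤ |g x - g y| := by
  wlog hyx : y ≤ x generalizing x y
  · rw [abs_sub_comm x, abs_sub_comm (g x)]
    exact this y x (le_of_not_ge hyx)
  rw [abs_of_nonneg (sub_nonneg.2 hyx)]
  refine le_trans ?_ (le_abs_self _)
  linarith [hg hyx]

lemma abs_sub_le_of_monotone_mul_sub (hg : Monotone g) (hL : Monotone fun x => L * x - g x)
    (x y : ℝ) : |g x - g y| ≤ L * |x - y| := by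
  wlog hyx : y ≤ x generalizing x y
  · rw [abs_sub_comm x, abs_sub_comm (g x)]
    exact this y x (le_of_not_ge hyx)
  rw [abs_of_nonneg (sub_nonneg.2 hyx), abs_of_nonneg (sub_nonneg.2 (hg hyx))]
  linarith [hL hyx]

lemma card_mul_abs_sub_le_of_add_sum_eq {ι : Type*} (s : Finset ι) {F G : ℝ → ℝ}
    (hG : Monotone G) (hc : Monotone fun x => F x - c * x)
    (hL : ∀ x y, |F x - F y| ≤ L * |x - y|) (u : ι → ℝ) {v σ τ : ℝ}
    (hτ : G (τ - v) + ∑ i ∈ s, F (τ - u i) = (s.card + 1) * F σ) :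
    s.card * c * |τ - σ| ≤ |F σ - G (σ - v)| + L * ∑ i ∈ s, |u i| := by
  set S : ℝ → ℝ := fun ρ => G (ρ - v) + ∑ i ∈ s, F (ρ - u i) with hS
  have hmono : Monotone fun ρ => S ρ - s.card * c * ρ := fun ρ ρ' hρ => by
    have hGle := hG (sub_le_sub_right hρ v)
    have hFle := Finset.sum_le_sum fun i (_ : i ∈ s) => hc (sub_le_sub_right hρ (u i))
    simp only [Finset.sum_sub_distrib, mul_sub, Finset.sum_const, nsmul_eq_mul] at hFle
    simp only [hS]
    linarith
  have hdiff : S τ - S σ = F σ - G (σ - v) + ∑ i ∈ s, (F σ - F (σ - u i)) := by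
    simp only [hS, hτ, Finset.sum_sub_distrib, Finset.sum_const, nsmul_eq_mul]
    ring
  calc s.card * c * |τ - σ|
      ≤ |S τ - S σ| := mul_abs_sub_le_of_monotone_sub_mul hmono τ σ
    _ ≤ |F σ - G (σ - v)| + |∑ i ∈ s, (F σ - F (σ - u i))| := hdiff ▸ abs_add_le _ _
    _ ≤ |F σ - G (σ - v)| + ∑ i ∈ s, L * |u i| := by
        gcongr
        refine (Finset.abs_sum_le_sum_abs _ _).trans (Finset.sum_le_sum fun i _ => ?_)
        simpa using hL σ (σ - u i)
    _ = |F σ - G (σ - v)| + L * ∑ i ∈ s, |u i| := by rw [Finset.mul_sum]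

end Monotone

section Convex

variable {f : ℝ → ℝ} {a : ℝ}

lemma monotone_sub_comp_sub_of_convexOn (hf : ConvexOn ℝ Set.univ f) {s : ℝ} (hs : 0 ≤ s) :
    Monotone fun y => f y - f (y - s) := by
  intro x y hxy
  rcases hs.eq_or_lt with rfl | hs
  · simp
  have hslope : (f x - f (x - s)) / (x - (x - s)) ≤ (f (y - s) - f y) / (y - s - y) :=
    calc (f x - f (x - s)) / (x - (x - s))
        ≤ (f y - f (x - s)) / (y - (x - s)) :=
          hf.secant_mono trivial trivial trivial (by linarith) (by linarith) hxy
      _ = (f (x - s) - f y) / (x - s - y) := by rw [← neg_div_neg_eq, neg_sub, neg_sub]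
      _ ≤ (f (y - s) - f y) / (y - s - y) :=
          hf.secant_mono trivial trivial trivial (by linarith) (by linarith) (by linarith)
  rw [← neg_div_neg_eq (f (y - s) - f y), neg_sub, neg_sub, sub_sub_cancel, sub_sub_cancel]
    at hslope
  exact (div_le_div_iff_of_pos_right hs).1 hslope

lemma deriv_deriv_sub_mul_sq (hf : ContDiff ℝ 2 f) (a y : ℝ) :
    deriv (deriv fun x => f x - a / 2 * x ^ 2) y = deriv (deriv f) y - a := by
  have hderiv : (deriv fun x => f x - a / 2 * x ^ 2) = fun x => deriv f x - a * x := by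
    funext x
    rw [deriv_fun_sub (hf.differentiable two_ne_zero x) (by fun_prop), deriv_const_mul_field,
      deriv_pow_field, Nat.cast_ofNat]
    ring
  rw [hderiv, deriv_fun_sub (hf.differentiable_deriv_two y) (by fun_prop), deriv_const_mul_field,
    deriv_id'', mul_one]

lemma convexOn_sub_mul_sq_of_le_deriv_deriv (hf : ContDiff ℝ 2 f)
    (ha : ∀ y, a ≤ deriv (deriv f) y) :
    ConvexOn ℝ Set.univ fun y => f y - a / 2 * y ^ 2 := by
  have hg : ContDiff ℝ 2 fun y => f y - a / 2 * y ^ 2 := by fun_prop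
  refine convexOn_univ_of_deriv2_nonneg (hg.differentiable two_ne_zero)
    hg.differentiable_deriv_two fun y => ?_
  exact (sub_nonneg.2 (ha y)).trans_eq (deriv_deriv_sub_mul_sq hf a y).symm

lemma concaveOn_sub_mul_sq_of_deriv_deriv_le (hf : ContDiff ℝ 2 f)
    (ha : ∀ y, deriv (deriv f) y ≤ a) :
    ConcaveOn ℝ Set.univ fun y => f y - a / 2 * y ^ 2 := by
  have hg : ContDiff ℝ 2 fun y => f y - a / 2 * y ^ 2 := by fun_prop
  refine concaveOn_univ_of_deriv2_nonpos (hg.differentiable two_ne_zero)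
    hg.differentiable_deriv_two fun y => ?_
  exact (deriv_deriv_sub_mul_sq hf a y).trans_le (sub_nonpos.2 (ha y))

end Convex

/-- The measure with density `exp (-f)` has finite exponential moments of every order `σ`, so that
the integrals defining `Psi f σ` converge for all `σ`. -/
def HasExponentialMoments (f : ℝ → ℝ) : Prop :=
  ∀ σ : ℝ, Integrable fun y => exp (-f y + σ * y)

lemma integrable_exp_quadratic {a : ℝ} (ha : 0 < a) (b c : ℝ) :
    Integrable fun y : ℝ => exp (-a * y ^ 2 + b * y + c) := by
  have hgauss := (integrable_cexp_quadratic (b := a) (by simpa) b c).norm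
  simpa [Complex.norm_exp, ← Complex.ofReal_pow] using hgauss

lemma hasExponentialMoments_of_convexOn_sub_mul_sq {f : ℝ → ℝ} {a : ℝ} (ha : 0 < a)
    (hf : ConvexOn ℝ Set.univ fun y => f y - a / 2 * y ^ 2) : HasExponentialMoments f := by
  intro σ
  have hcont : Continuous fun y => f y - a / 2 * y ^ 2 :=
    continuousOn_univ.1 (hf.continuousOn isOpen_univ)
  have hfcont : Continuous f := by
    simpa [Pi.add_def] using hcont.add (by fun_prop : Continuous fun y => a / 2 * y ^ 2)
  obtain ⟨c, d, hcd⟩ := hf.exists_affine_le_real isClosed_univ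
    (hcont.lowerSemicontinuous.lowerSemicontinuousOn _)
  refine (integrable_exp_quadratic (half_pos ha) (σ - c) (-d)).mono' (by fun_prop)
    (.of_forall fun y => ?_)
  rw [norm_of_nonneg (exp_pos _).le, exp_le_exp]
  linarith [hcd y trivial]

lemma exp_neg_comp_sub_add_mul (f : ℝ → ℝ) (s σ y : ℝ) :
    exp (-f (y - s) + σ * y) = exp (σ * s) * exp (-f (y - s) + σ * (y - s)) := by
  rw [← exp_add]
  ring_nf

namespace HasExponentialMoments

variable {f : ℝ → ℝ}

lemma integrable_mul (hf : HasExponentialMoments f) (σ : ℝ) :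
    Integrable fun y => y * exp (-f y + σ * y) := by
  refine ((hf (σ + 1)).add (hf (σ - 1))).mono'
    (measurable_id.aestronglyMeasurable.mul (hf σ).aestronglyMeasurable) (.of_forall fun y => ?_)
  have habs : |y| ≤ exp y + exp (-y) :=
    ((le_add_of_nonneg_right zero_le_one).trans (add_one_le_exp |y|)).trans (exp_abs_le y)
  calc ‖y * exp (-f y + σ * y)‖
      = |y| * exp (-f y + σ * y) := by rw [norm_mul, norm_of_nonneg (exp_pos _).le, norm_eq_abs]
    _ ≤ (exp y + exp (-y)) * exp (-f y + σ * y) := by gcongr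
    _ = exp (-f y + (σ + 1) * y) + exp (-f y + (σ - 1) * y) := by
        rw [add_mul, ← exp_add, ← exp_add]
        ring_nf

lemma integrable_sub_mul (hf : HasExponentialMoments f) (σ m : ℝ) :
    Integrable fun y => (y - m) * exp (-f y + σ * y) := by
  simpa only [sub_mul, Pi.sub_def] using (hf.integrable_mul σ).sub ((hf σ).const_mul m)

lemma integral_sub_mul (hf : HasExponentialMoments f) (σ m : ℝ) :
    ∫ y, (y - m) * exp (-f y + σ * y) = (Psi f σ - m) * ∫ y, exp (-f y + σ * y) := by
  simp only [sub_mul]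
  rw [integral_sub (hf.integrable_mul σ) ((hf σ).const_mul m), integral_const_mul, Psi,
    div_mul_cancel₀ _ (integral_exp_pos (hf σ)).ne']

lemma sub_mul_id (hf : HasExponentialMoments f) (t : ℝ) :
    HasExponentialMoments fun y => f y - t * y := fun σ => by
  convert hf (σ + t) using 3
  ring

lemma comp_sub_right (hf : HasExponentialMoments f) (s : ℝ) :
    HasExponentialMoments fun y => f (y - s) := fun σ => by
  simp only [exp_neg_comp_sub_add_mul f s σ]
  exact ((hf σ).comp_sub_right s).const_mul _

end HasExponentialMoments

section Psi

variable {f g : ℝ → ℝ}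

lemma psi_sub_mul_id (f : ℝ → ℝ) (t σ : ℝ) : Psi (fun y => f y - t * y) σ = Psi f (σ + t) := by
  have hexponent (y : ℝ) : -(f y - t * y) + σ * y = -f y + (σ + t) * y := by ring
  simp only [Psi, hexponent]

lemma psi_comp_sub_right (hf : HasExponentialMoments f) (s σ : ℝ) :
    Psi (fun y => f (y - s)) σ = Psi f σ + s := by
  have hmoment : ∫ y, (y - (Psi f σ + s)) * exp (-f (y - s) + σ * y) = 0 :=
    calc ∫ y, (y - (Psi f σ + s)) * exp (-f (y - s) + σ * y)
        = ∫ y, exp (σ * s) * ((y - s - Psi f σ) * exp (-f (y - s) + σ * (y - s))) := by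
          congr 1 with y
          rw [exp_neg_comp_sub_add_mul]
          ring
      _ = exp (σ * s) * ∫ y, (y - Psi f σ) * exp (-f y + σ * y) := by
          rw [integral_const_mul,
            integral_sub_right_eq_self fun y => (y - Psi f σ) * exp (-f y + σ * y)]
      _ = 0 := by rw [hf.integral_sub_mul, sub_self, zero_mul, mul_zero]
  rw [(hf.comp_sub_right s).integral_sub_mul σ] at hmoment
  exact sub_eq_zero.1
    ((mul_eq_zero.1 hmoment).resolve_right (integral_exp_pos (hf.comp_sub_right s σ)).ne')

lemma psi_le_psi_of_monotone_sub (hf : HasExponentialMoments f) (hg : HasExponentialMoments g)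
    (hfg : Monotone fun y => f y - g y) (σ : ℝ) : Psi f σ ≤ Psi g σ := by
  set m := Psi f σ
  have hratio (y : ℝ) : exp (-g y + σ * y) = exp (f y - g y) * exp (-f y + σ * y) := by
    rw [← exp_add]
    ring_nf
  have hpointwise (y : ℝ) : exp (f m - g m) * ((y - m) * exp (-f y + σ * y)) ≤
      (y - m) * exp (-g y + σ * y) := by
    have hsign : 0 ≤ (y - m) * (exp (f y - g y) - exp (f m - g m)) := by
      rcases le_total m y with hy | hy
      · exact mul_nonneg (sub_nonneg.2 hy) (sub_nonneg.2 (exp_le_exp.2 (hfg hy)))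
      · exact mul_nonneg_of_nonpos_of_nonpos (sub_nonpos.2 hy)
          (sub_nonpos.2 (exp_le_exp.2 (hfg hy)))
    rw [hratio]
    linarith [mul_nonneg hsign (exp_pos (-f y + σ * y)).le]
  have hmoment : 0 ≤ (Psi g σ - m) * ∫ y, exp (-g y + σ * y) :=
    calc 0 = ∫ y, exp (f m - g m) * ((y - m) * exp (-f y + σ * y)) := by
          rw [integral_const_mul, hf.integral_sub_mul, sub_self, zero_mul, mul_zero]
      _ ≤ ∫ y, (y - m) * exp (-g y + σ * y) :=
          integral_mono ((hf.integrable_sub_mul σ m).const_mul _) (hg.integrable_sub_mul σ m)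
            hpointwise
      _ = (Psi g σ - m) * ∫ y, exp (-g y + σ * y) := hg.integral_sub_mul σ m
  exact sub_nonneg.1 (nonneg_of_mul_nonneg_left hmoment (integral_exp_pos (hg σ)))

lemma monotone_psi (hf : HasExponentialMoments f) : Monotone (Psi f) := by
  intro σ τ hστ
  have hmono : Monotone fun y => f y - (f y - (τ - σ) * y) := by
    simpa only [sub_sub_cancel, id] using monotone_id.const_mul (sub_nonneg.2 hστ)
  simpa only [psi_sub_mul_id, add_sub_cancel] using
    psi_le_psi_of_monotone_sub hf (hf.sub_mul_id (τ - σ)) hmono σ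

lemma psi_add_mul_le (hf : HasExponentialMoments f) {a s : ℝ} (hs : 0 ≤ s)
    (ha : ConvexOn ℝ Set.univ fun y => f y - a / 2 * y ^ 2) (σ : ℝ) :
    Psi f (σ + a * s) ≤ Psi f σ + s := by
  rw [← psi_sub_mul_id, ← psi_comp_sub_right hf]
  refine psi_le_psi_of_monotone_sub (hf.sub_mul_id _) (hf.comp_sub_right s) (fun x y hxy => ?_) σ
  linarith [monotone_sub_comp_sub_of_convexOn ha hs hxy]

lemma add_le_psi_add_mul (hf : HasExponentialMoments f) {b s : ℝ} (hs : 0 ≤ s)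
    (hb : ConcaveOn ℝ Set.univ fun y => f y - b / 2 * y ^ 2) (σ : ℝ) :
    Psi f σ + s ≤ Psi f (σ + b * s) := by
  rw [← psi_sub_mul_id, ← psi_comp_sub_right hf]
  refine psi_le_psi_of_monotone_sub (hf.comp_sub_right s) (hf.sub_mul_id _) (fun x y hxy => ?_) σ
  have hincr := monotone_sub_comp_sub_of_convexOn hb.neg hs hxy
  simp only [Pi.neg_apply] at hincr
  linarith

lemma monotone_inv_mul_sub_psi {a : ℝ} (ha : 0 < a)
    (hf : ConvexOn ℝ Set.univ fun y => f y - a / 2 * y ^ 2) :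
    Monotone fun σ => a⁻¹ * σ - Psi f σ := by
  intro σ τ hστ
  have hs : 0 ≤ a⁻¹ * (τ - σ) := mul_nonneg (inv_nonneg.2 ha.le) (sub_nonneg.2 hστ)
  have hle := psi_add_mul_le (hasExponentialMoments_of_convexOn_sub_mul_sq ha hf) hs hf σ
  rw [mul_inv_cancel_left₀ ha.ne', add_sub_cancel] at hle
  linarith

lemma monotone_psi_sub_inv_mul (hf : HasExponentialMoments f) {b : ℝ} (hb : 0 < b)
    (hfb : ConcaveOn ℝ Set.univ fun y => f y - b / 2 * y ^ 2) :
    Monotone fun σ => Psi f σ - b⁻¹ * σ := by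
  intro σ τ hστ
  have hs : 0 ≤ b⁻¹ * (τ - σ) := mul_nonneg (inv_nonneg.2 hb.le) (sub_nonneg.2 hστ)
  have hle := add_le_psi_add_mul hf hs hfb σ
  rw [mul_inv_cancel_left₀ hb.ne', add_sub_cancel] at hle
  linarith

end Psi

theorem maximizer_closeness_with_forces_general {ψ φ : ℝ → ℝ} {κ₁ κ₂ : ℝ}
    (hκ₁ : 0 < κ₁) (hκ₂ : 0 < κ₂)
    (hconvex : ConvexOn ℝ Set.univ fun y => ψ y - κ₁ / 2 * y ^ 2)
    (hconcave : ConcaveOn ℝ Set.univ fun y => ψ y - κ₂ / 2 * y ^ 2)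
    (hφ : HasExponentialMoments φ) {h : ℕ → ℝ} (hh : Summable fun i => |h i|)
    {A σ₀ : ℝ} (hσ₀ : A = Psi ψ σ₀) :
    ∃ C > 0, ∀ N : ℕ, 2 ≤ N → ∀ σN : ℝ,
      A = (N : ℝ)⁻¹ * (Psi φ (σN - h 1) + ∑ i ∈ Finset.Icc 2 N, Psi ψ (σN - h i)) →
      |σN - σ₀| ≤ C / N := by
  have hψ := hasExponentialMoments_of_convexOn_sub_mul_sq hκ₁ hconvex
  set B := |Psi ψ σ₀ - Psi φ (σ₀ - h 1)| + κ₁⁻¹ * ∑' i, |h i|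
  have hB : 0 ≤ B := by positivity
  refine ⟨2 * κ₂ * B + 1, add_pos_of_nonneg_of_pos (mul_nonneg (by positivity) hB) one_pos,
    fun N hN σN hσN => ?_⟩
  have hN2 : (2 : ℝ) ≤ N := by exact_mod_cast hN
  have hcard : ((Finset.Icc 2 N).card : ℝ) = N - 1 := by
    rw [Nat.card_Icc, Nat.cast_sub (by omega)]
    push_cast
    ring
  have hsum : Psi φ (σN - h 1) + ∑ i ∈ Finset.Icc 2 N, Psi ψ (σN - h i) =
      ((Finset.Icc 2 N).card + 1) * Psi ψ σ₀ := by
    rw [hcard, sub_add_cancel, ← hσ₀, hσN, mul_inv_cancel_left₀ (by positivity)]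
  have hbound : (N - 1) * κ₂⁻¹ * |σN - σ₀| ≤ B :=
    calc (N - 1) * κ₂⁻¹ * |σN - σ₀|
        ≤ |Psi ψ σ₀ - Psi φ (σ₀ - h 1)| + κ₁⁻¹ * ∑ i ∈ Finset.Icc 2 N, |h i| := hcard ▸
          card_mul_abs_sub_le_of_add_sum_eq (Finset.Icc 2 N) (monotone_psi hφ)
            (monotone_psi_sub_inv_mul hψ hκ₂ hconcave)
            (abs_sub_le_of_monotone_mul_sub (monotone_psi hψ)
              (monotone_inv_mul_sub_psi hκ₁ hconvex)) h hsum
      _ ≤ B :=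
          (add_le_add_iff_left _).2 <| mul_le_mul_of_nonneg_left
            (hh.sum_le_tsum _ fun i _ => abs_nonneg _) (inv_nonneg.2 hκ₁.le)
  rw [le_div_iff₀ (by positivity)]
  calc |σN - σ₀| * N ≤ |σN - σ₀| * (2 * (N - 1)) := by gcongr; linarith
    _ = 2 * κ₂ * ((N - 1) * κ₂⁻¹ * |σN - σ₀|) := by field_simp
    _ ≤ 2 * κ₂ * B := by gcongr
    _ ≤ 2 * κ₂ * B + 1 := by linarith

/-- any solution `σ_N` of
`A = (1/N)(Ψ_P(σ_N - h₁) + ∑_{i=2}^N Ψ(σ_N - h_i))` satisfies `|σ_N - σ₀| ≤ C/N`,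
where `σ₀` is the unique solution of `A = Ψ(σ₀)`. -/
theorem maximizer_closeness_with_forces
    (ψ P : ℝ → ℝ) (κ₁ κ₂ ς₁ ς₂ : ℝ)
    (hψ : ContDiff ℝ 2 ψ) (hP : ContDiff ℝ 2 P)
    (hκ₁ : 0 < κ₁) (hκ : κ₁ ≤ κ₂) (hς₁ : 0 < ς₁) (hς : ς₁ ≤ ς₂)
    (hψ'' : ∀ y : ℝ, κ₁ ≤ deriv (deriv ψ) y ∧ deriv (deriv ψ) y ≤ κ₂)
    (hψP'' : ∀ y : ℝ, ς₁ ≤ deriv (deriv (fun z => ψ z + P z)) y ∧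
        deriv (deriv (fun z => ψ z + P z)) y ≤ ς₂)
    (h : ℕ → ℝ) (hh : Summable fun i => |h i|)
    (A σ₀ : ℝ) (hσ₀ : A = Psi ψ σ₀)
    (hσ₀uniq : ∀ σ : ℝ, A = Psi ψ σ → σ = σ₀) :
    ∃ C > 0, ∀ N : ℕ, 2 ≤ N → ∀ σN : ℝ,
      A = (N : ℝ)⁻¹ * (Psi (fun z => ψ z + P z) (σN - h 1) +
        ∑ i ∈ Finset.Icc 2 N, Psi ψ (σN - h i)) →
      |σN - σ₀| ≤ C / N :=
  maximizer_closeness_with_forces_general hκ₁ (hκ₁.trans_le hκ)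
    (convexOn_sub_mul_sq_of_le_deriv_deriv hψ fun y => (hψ'' y).1)
    (concaveOn_sub_mul_sq_of_deriv_deriv_le hψ fun y => (hψ'' y).2)
    (hasExponentialMoments_of_convexOn_sub_mul_sq hς₁
      (convexOn_sub_mul_sq_of_le_deriv_deriv (hψ.add hP) fun y => (hψP'' y).1)) hh hσ₀
end
end
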